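/- Let 0 < δ < 3/2 and let u be an admissible map with D_δ(u) = 0 and ‖u‖ ≠ 0. Then E(u) ≥ a(δ)·r(δ)², where a(δ) = 1/2 − δ/3 and r(δ) = 2√(2π)·δ/H. (Hence the potential-well depth d(δ) = inf{E(u) : D_δ(u) = 0, ‖u‖ ≠ 0} satisfies d(δ) ≥ a(δ)r(δ)².) -/

import Mathlib

open MeasureTheory Real Filter

/-- x-partial derivative of a map `u : ℝ² → ℝ³`. -/
noncomputable def pderivX (u : ℝ × ℝ → Fin 3 → ℝ) (p : ℝ × ℝ) : Fin 3 → ℝ :=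
  fderiv ℝ u p (1, 0)

/-- y-partial derivative of a map `u : ℝ² → ℝ³`. -/
noncomputable def pderivY (u : ℝ × ℝ → Fin 3 → ℝ) (p : ℝ × ℝ) : Fin 3 → ℝ :=
  fderiv ℝ u p (0, 1)

/-- Euclidean dot product on `ℝ³`. -/
def dot3 (a b : Fin 3 → ℝ) : ℝ := ∑ i, a i * b i

/-- Squared Dirichlet norm `‖u‖² = ∫_Ω |∇u|²`. -/
noncomputable def dirEnergy (Ω : Set (ℝ × ℝ)) (u : ℝ × ℝ → Fin 3 → ℝ) : ℝ :=
  ∫ p in Ω, (dot3 (pderivX u p) (pderivX u p) + dot3 (pderivY u p) (pderivY u p))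

/-- Dirichlet norm `‖u‖`. -/
noncomputable def dnorm (Ω : Set (ℝ × ℝ)) (u : ℝ × ℝ → Fin 3 → ℝ) : ℝ :=
  Real.sqrt (dirEnergy Ω u)

/-- Volume functional `V(u) = ∫_Ω u · (u_x ∧ u_y)`. -/
noncomputable def vol (Ω : Set (ℝ × ℝ)) (u : ℝ × ℝ → Fin 3 → ℝ) : ℝ :=
  ∫ p in Ω, dot3 (u p) (crossProduct (pderivX u p) (pderivY u p))

/-- An admissible map: smooth with compact support contained in `Ω`. -/
def IsAdmissible (Ω : Set (ℝ × ℝ)) (u : ℝ × ℝ → Fin 3 → ℝ) : Prop :=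
  ContDiff ℝ (⊤ : ℕ∞) u ∧ HasCompactSupport u ∧ tsupport u ⊆ Ω

/-- Energy functional `E(u) = (1/2)‖u‖² + (2H/3)·V(u)`. -/
noncomputable def Efun (Ω : Set (ℝ × ℝ)) (H : ℝ) (u : ℝ × ℝ → Fin 3 → ℝ) : ℝ :=
  (1 / 2) * dirEnergy Ω u + (2 * H / 3) * vol Ω u

/-- Modified Nehari functional `D_δ(u) = δ‖u‖² + 2H·V(u)`; `D = D₁`. -/
noncomputable def Dfun (Ω : Set (ℝ × ℝ)) (H δ : ℝ) (u : ℝ × ℝ → Fin 3 → ℝ) : ℝ :=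
  δ * dirEnergy Ω u + 2 * H * vol Ω u

/-- The radius `r(δ) = 2√(2π)·δ/H`. -/
noncomputable def rPW (H δ : ℝ) : ℝ := 2 * Real.sqrt (2 * Real.pi) * δ / H

/-- The coefficient `a(δ) = 1/2 − δ/3`. -/
noncomputable def aPW (δ : ℝ) : ℝ := 1 / 2 - δ / 3

set_option linter.unusedSimpArgs false

lemma sigma_deriv (w : ℝ) (hw : |w| < 1) :
    (2 * sin (arcsin w / 3)) ^ 2 < 1 ∧
    HasDerivAt (fun w => 2 * sin (arcsin w / 3)) (2 / (3 * (1 - (2 * sin (arcsin w / 3)) ^ 2))) w := by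
  obtain ⟨h1, h2⟩ := abs_lt.1 hw
  set α := arcsin w / 3 with hα
  have hs3 : sin (3 * α) = w := by
    rw [hα, mul_div_cancel₀ _ (by norm_num)]; exact sin_arcsin h1.le h2.le
  have hb1 : -(π / 2) < arcsin w := neg_pi_div_two_lt_arcsin.2 h1
  have hb2 : arcsin w < π / 2 := arcsin_lt_pi_div_two.2 h2
  have hc3 : 0 < cos (3 * α) := cos_pos_of_mem_Ioo ⟨by rw [hα]; linarith, by rw [hα]; linarith⟩
  have hπ := pi_pos
  have hc : 0 < cos α := cos_pos_of_mem_Ioo ⟨by rw [hα]; linarith, by rw [hα]; linarith⟩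
  have hk : cos (3 * α) = cos α * (1 - (2 * sin α) ^ 2) := by
    rw [cos_three_mul]; have := sin_sq_add_cos_sq α
    linear_combination (4 * cos α) * this
  have hpos : 0 < 1 - (2 * sin α) ^ 2 := by
    rw [hk] at hc3; exact (pos_iff_pos_of_mul_pos hc3).1 hc
  refine ⟨by linarith, ?_⟩
  have hd := (((hasDerivAt_arcsin (by linarith : w ≠ -1) (by linarith : w ≠ 1)).div_const 3).sin).const_mul 2
  refine hd.congr_deriv ?_
  have : √(1 - w ^ 2) = cos (3 * α) := by
    rw [← hs3, ← abs_cos_eq_sqrt_one_sub_sin_sq, abs_of_pos hc3]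
  rw [this, hk, ← hα]
  field_simp

lemma amgm_calib (a k R : ℝ) (ha : 0 ≤ a) (hk : 0 < k) (hR : 0 < R) :
    3 * a / R ≤ √k * √(4 * π * a) + a * (a / (π * R ^ 3 * k)) := by
  have hπ := pi_pos
  set q := √(a / π) with hq
  have hq0 : 0 ≤ q := sqrt_nonneg _
  have ha' : a = π * q ^ 2 := by rw [hq, sq_sqrt (by positivity)]; field_simp
  have e1 : √(4 * π * a) = 2 * π * q := by
    rw [ha', show 4 * π * (π * q ^ 2) = (2 * π * q) ^ 2 by ring]
    exact sqrt_sq (by positivity)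
  set r := √k with hr
  have hr0 : 0 < r := sqrt_pos.2 hk
  have hk' : k = r ^ 2 := by rw [hr, sq_sqrt hk.le]
  rw [e1, ha', hk']
  -- 3 π q² / R ≤ 2π q r + π q⁴/(R³ r²)
  have : r * (2 * π * q) + π * q ^ 2 * (π * q ^ 2 / (π * R ^ 3 * r ^ 2)) - 3 * (π * q ^ 2) / R
     = π * q * ((q - R * r) ^ 2 * (q + 2 * (R * r))) / (R ^ 3 * r ^ 2) := by
    field_simp; ring
  have h2 : 0 ≤ π * q * ((q - R * r) ^ 2 * (q + 2 * (R * r))) / (R ^ 3 * r ^ 2) := by positivity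
  linarith

lemma calib_R (M : ℝ) (hM : 0 ≤ M) (a a' S : ℝ → ℝ) (ha : ∀ t, HasDerivAt a (a' t) t)
    (ha'c : Continuous a') (hSc : Continuous S) (ha0 : ∀ t, 0 ≤ a t)
    (hm : a (-M) = 0) (hp : a M = 0)
    (hS : ∀ t c s, 0 ≤ c → c ^ 2 + s ^ 2 ≤ 1 → c * √(4 * π * a t) + s * a' t ≤ S t)
    (R : ℝ) (hR : 0 < R) (hRW : (∫ t in (-M)..M, a t) < 4 * π * R ^ 3 / 3) :
    3 * (∫ t in (-M)..M, a t) ≤ R * ∫ t in (-M)..M, S t := by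
  have hπ := pi_pos
  have hac : Continuous a := continuous_iff_continuousAt.2 fun t => (ha t).continuousAt
  set W := ∫ t in (-M)..M, a t with hW
  let v : ℝ → ℝ := fun t => ∫ r in (-M)..t, a r
  have hv : ∀ t, HasDerivAt v (a t) t := fun t =>
    intervalIntegral.integral_hasDerivAt_right (hac.intervalIntegrable _ _)
      (hac.stronglyMeasurableAtFilter _ _) hac.continuousAt
  have hv0 : ∀ t ∈ Set.Icc (-M) M, 0 ≤ v t := fun t ht =>
    intervalIntegral.integral_nonneg ht.1 fun r _ => ha0 r
  have hv1 : ∀ t ∈ Set.Icc (-M) M, v t ≤ W := by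
    intro t ht
    have : v t + ∫ r in t..M, a r = W :=
      intervalIntegral.integral_add_adjacent_intervals (hac.intervalIntegrable _ _)
        (hac.intervalIntegrable _ _)
    have h2 : 0 ≤ ∫ r in t..M, a r := intervalIntegral.integral_nonneg ht.2 fun r _ => ha0 r
    linarith
  let w : ℝ → ℝ := fun t => (2 * v t - W) * (3 / (4 * π * R ^ 3))
  have hwd : ∀ t, HasDerivAt w (3 * a t / (2 * π * R ^ 3)) t := by
    intro t
    have := (((hv t).const_mul 2).sub_const W).mul_const (3 / (4 * π * R ^ 3))
    refine this.congr_deriv ?_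
    field_simp; ring
  have hw1 : ∀ t ∈ Set.Icc (-M) M, |w t| < 1 := by
    intro t ht
    have h1 := hv0 t ht
    have h2 := hv1 t ht
    have h3 : |2 * v t - W| ≤ W := abs_le.2 ⟨by linarith, by linarith⟩
    have h4 : |w t| = |2 * v t - W| * (3 / (4 * π * R ^ 3)) := by
      simp only [w]; rw [abs_mul, abs_of_pos (by positivity : 0 < 3 / (4 * π * R ^ 3))]
    rw [h4, mul_div, div_lt_one (by positivity)]
    linarith
  let σ : ℝ → ℝ := fun t => 2 * sin (arcsin (w t) / 3)
  have hσ1 : ∀ t ∈ Set.Icc (-M) M, σ t ^ 2 < 1 := fun t ht => (sigma_deriv _ (hw1 t ht)).1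
  have hσd : ∀ t ∈ Set.Icc (-M) M, HasDerivAt σ (a t / (π * R ^ 3 * (1 - σ t ^ 2))) t := by
    intro t ht
    have := (sigma_deriv _ (hw1 t ht)).2.comp t (hwd t)
    refine this.congr_deriv ?_
    have : 1 - σ t ^ 2 ≠ 0 := by have := hσ1 t ht; linarith
    change 2 / (3 * (1 - σ t ^ 2)) * _ = _
    field_simp
  have hσc : Continuous σ := by
    have : Continuous w := continuous_iff_continuousAt.2 fun t => (hwd t).continuousAt
    fun_prop
  have huI : Set.uIcc (-M) M = Set.Icc (-M) M := Set.uIcc_of_le (by linarith)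
  -- derivative of σ * a
  have hD : ∫ t in (-M)..M, (a t / (π * R ^ 3 * (1 - σ t ^ 2)) * a t + σ t * a' t) = 0 := by
    have hIntg : IntervalIntegrable (fun t => a t / (π * R ^ 3 * (1 - σ t ^ 2)) * a t + σ t * a' t)
        volume (-M) M := by
      apply ContinuousOn.intervalIntegrable
      rw [huI]
      refine ContinuousOn.add (ContinuousOn.mul (ContinuousOn.div hac.continuousOn ?_ ?_)
        hac.continuousOn) (by fun_prop)
      · fun_prop
      · intro t ht
        have := hσ1 t ht
        have : 0 < 1 - σ t ^ 2 := by linarith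
        positivity
    rw [intervalIntegral.integral_eq_sub_of_hasDerivAt (f := fun t => σ t * a t) ?_ hIntg]
    · simp [hm, hp]
    · intro t ht
      rw [huI] at ht
      exact (hσd t ht).mul (ha t)
  have hle : ∫ t in (-M)..M, (3 * a t / R -
      (a t / (π * R ^ 3 * (1 - σ t ^ 2)) * a t + σ t * a' t)) ≤ ∫ t in (-M)..M, S t := by
    have hcont : ContinuousOn (fun t => a t / (π * R ^ 3 * (1 - σ t ^ 2)) * a t + σ t * a' t)
        (Set.Icc (-M) M) := by
      refine ContinuousOn.add (ContinuousOn.mul (ContinuousOn.div hac.continuousOn ?_ ?_)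
        hac.continuousOn) (by fun_prop)
      · fun_prop
      · intro t ht
        have := hσ1 t ht
        have : 0 < 1 - σ t ^ 2 := by linarith
        positivity
    apply intervalIntegral.integral_mono_on (by linarith)
    · apply ContinuousOn.intervalIntegrable
      rw [huI]
      exact ContinuousOn.sub (by fun_prop) hcont
    · exact hSc.intervalIntegrable _ _
    · intro t ht
      have h1 := hσ1 t ht
      have hk : 0 < 1 - σ t ^ 2 := by linarith
      have h2 := amgm_calib (a t) (1 - σ t ^ 2) R (ha0 t) hk hR
      have h3 := hS t (√(1 - σ t ^ 2)) (-σ t) (sqrt_nonneg _) (by rw [sq_sqrt hk.le]; linarith)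
      have e : a t / (π * R ^ 3 * (1 - σ t ^ 2)) * a t = a t * (a t / (π * R ^ 3 * (1 - σ t ^ 2))) := by ring
      rw [e]
      linarith
  rw [intervalIntegral.integral_sub, hD] at hle
  · have : ∫ t in (-M)..M, 3 * a t / R = 3 * W / R := by
      rw [intervalIntegral.integral_div, intervalIntegral.integral_const_mul]
    rw [this, sub_zero, div_le_iff₀ hR] at hle
    linarith
  · exact (by fun_prop : Continuous fun t => 3 * a t / R).intervalIntegrable _ _
  · apply ContinuousOn.intervalIntegrable
    rw [huI]
    refine ContinuousOn.add (ContinuousOn.mul (ContinuousOn.div hac.continuousOn ?_ ?_)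
        hac.continuousOn) (by fun_prop)
    · fun_prop
    · intro t ht
      have := hσ1 t ht
      have : 0 < 1 - σ t ^ 2 := by linarith
      positivity

lemma calib_nonneg (M : ℝ) (hM : 0 ≤ M) (a a' S : ℝ → ℝ) (ha : ∀ t, HasDerivAt a (a' t) t)
    (ha'c : Continuous a') (hSc : Continuous S) (ha0 : ∀ t, 0 ≤ a t)
    (hm : a (-M) = 0) (hp : a M = 0)
    (hS : ∀ t c s, 0 ≤ c → c ^ 2 + s ^ 2 ≤ 1 → c * √(4 * π * a t) + s * a' t ≤ S t) :
    36 * π * (∫ t in (-M)..M, a t) ^ 2 ≤ (∫ t in (-M)..M, S t) ^ 3 := by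
  have hπ := pi_pos
  have h := calib_R M hM a a' S ha ha'c hSc ha0 hm hp hS
  set W := ∫ t in (-M)..M, a t with hWd
  set T := ∫ t in (-M)..M, S t with hT
  have hW0 : 0 ≤ W := intervalIntegral.integral_nonneg (by linarith) fun t _ => ha0 t
  have hT0 : 0 ≤ T := intervalIntegral.integral_nonneg (by linarith) fun t _ => by
    simpa using hS t 0 0 le_rfl (by norm_num)
  rcases hW0.eq_or_lt with h0 | h0
  · rw [← h0]; simp; positivity
  by_contra! hcon
  -- choose R with 3W/(4π) < R^3 and R^3 T^3 < 27 W^3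
  obtain ⟨y, hy1, hy2⟩ : ∃ y, 3 * W / (4 * π) < y ∧ y * T ^ 3 < 27 * W ^ 3 := by
    rcases (pow_nonneg hT0 3).eq_or_lt with hT3 | hT3
    · exact ⟨3 * W / (4 * π) + 1, by linarith, by rw [← hT3]; simp; positivity⟩
    · have : 3 * W / (4 * π) < 27 * W ^ 3 / T ^ 3 := by
        rw [div_lt_div_iff₀ (by positivity) hT3]
        nlinarith
      obtain ⟨y, h1, h2⟩ := exists_between this
      exact ⟨y, h1, by rwa [lt_div_iff₀ hT3] at h2⟩
  have hy0 : 0 < y := lt_trans (by positivity) hy1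
  have hR3 : (y ^ ((1:ℝ) / 3)) ^ 3 = y := by
    rw [← rpow_natCast, ← rpow_mul hy0.le]; norm_num
  have h1 := h (y ^ ((1:ℝ) / 3)) (by positivity) (by
    rw [hR3]; rw [div_lt_iff₀ (by positivity)] at hy1; linarith)
  have h2 := pow_le_pow_left₀ (by positivity) h1 3
  rw [mul_pow, mul_pow, hR3] at h2
  norm_num at h2
  linarith

lemma calib (M : ℝ) (hM : 0 ≤ M) (A A' S : ℝ → ℝ) (hA : ∀ t, HasDerivAt A (A' t) t)
    (hA'c : Continuous A') (hSc : Continuous S)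
    (hm : A (-M) = 0) (hp : A M = 0)
    (hS : ∀ t c s, 0 ≤ c → c ^ 2 + s ^ 2 ≤ 1 → c * √(4 * π * |A t|) + s * A' t ≤ S t) :
    36 * π * (∫ t in (-M)..M, A t) ^ 2 ≤ (∫ t in (-M)..M, S t) ^ 3 := by
  have hπ := pi_pos
  have hAc : Continuous A := continuous_iff_continuousAt.2 fun t => (hA t).continuousAt
  set T := ∫ t in (-M)..M, S t with hT
  have hW0 : 0 ≤ ∫ t in (-M)..M, |A t| :=
    intervalIntegral.integral_nonneg (by linarith) fun t _ => abs_nonneg _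
  have key : ∀ ε > 0, 36 * π * (∫ t in (-M)..M, (√(A t ^ 2 + ε ^ 2) - ε)) ^ 2 ≤ T ^ 3 := by
    intro ε hε
    have hpos : ∀ t, 0 < √(A t ^ 2 + ε ^ 2) := fun t => sqrt_pos.2 (by positivity)
    refine calib_nonneg M hM (fun t => √(A t ^ 2 + ε ^ 2) - ε)
      (fun t => A t / √(A t ^ 2 + ε ^ 2) * A' t) S ?_ ?_ hSc ?_ ?_ ?_ ?_
    · intro t
      have := ((((hA t).pow 2).add_const (ε ^ 2)).sqrt
        (by have : 0 < A t ^ 2 + ε ^ 2 := by positivity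
            exact this.ne')).sub_const ε
      refine this.congr_deriv ?_
      simp only [Pi.pow_apply]
      have := hpos t
      field_simp
      norm_num
      ring
    · exact ((hAc.div (by fun_prop) fun t => (hpos t).ne')).mul hA'c
    · intro t
      have : ε ≤ √(A t ^ 2 + ε ^ 2) := le_sqrt_of_sq_le (by nlinarith [sq_nonneg (A t)])
      simpa using this
    · simp [hm, sqrt_sq hε.le]
    · simp [hp, sqrt_sq hε.le]
    · intro t c s hc hcs
      have h1 : √(A t ^ 2 + ε ^ 2) ^ 2 = A t ^ 2 + ε ^ 2 := sq_sqrt (by positivity)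
      have h2 := hpos t
      have h3 : √(A t ^ 2 + ε ^ 2) ≤ |A t| + ε := by
        apply sqrt_le_iff.2 ⟨by positivity, ?_⟩
        nlinarith [sq_abs (A t), abs_nonneg (A t)]
      have h4 := hS t c (s * (A t / √(A t ^ 2 + ε ^ 2))) hc (by
        have : (A t / √(A t ^ 2 + ε ^ 2)) ^ 2 ≤ 1 := by
          rw [div_pow, h1]; apply div_le_one_of_le₀ <;> nlinarith [sq_nonneg (A t), sq_nonneg ε]
        rw [mul_pow]; nlinarith [sq_nonneg s])
      have h5 : c * √(4 * π * (√(A t ^ 2 + ε ^ 2) - ε)) ≤ c * √(4 * π * |A t|) := by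
        apply mul_le_mul_of_nonneg_left _ hc
        apply sqrt_le_sqrt
        apply mul_le_mul_of_nonneg_left _ (by positivity)
        linarith
      have e : s * (A t / √(A t ^ 2 + ε ^ 2)) * A' t = s * (A t / √(A t ^ 2 + ε ^ 2) * A' t) := by ring
      rw [e] at h4
      linarith
  have key2 : ∀ ε > 0, 36 * π * (max 0 ((∫ t in (-M)..M, |A t|) - 2 * M * ε)) ^ 2 ≤ T ^ 3 := by
    intro ε hε
    refine le_trans ?_ (key ε hε)
    have h1 : (∫ t in (-M)..M, |A t|) - 2 * M * ε ≤ ∫ t in (-M)..M, (√(A t ^ 2 + ε ^ 2) - ε) := by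
      have : (∫ t in (-M)..M, |A t|) - 2 * M * ε = ∫ t in (-M)..M, (|A t| - ε) := by
        rw [intervalIntegral.integral_sub (hAc.abs.intervalIntegrable _ _) (by simp)]
        rw [intervalIntegral.integral_const, smul_eq_mul]; ring
      rw [this]
      apply intervalIntegral.integral_mono_on (by linarith)
      · exact (hAc.abs.sub continuous_const).intervalIntegrable _ _
      · exact (by fun_prop : Continuous fun t => √(A t ^ 2 + ε ^ 2) - ε).intervalIntegrable _ _
      · intro t _
        have : |A t| ≤ √(A t ^ 2 + ε ^ 2) := abs_le_sqrt (by nlinarith [sq_nonneg ε])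
        linarith
    have h2 : 0 ≤ ∫ t in (-M)..M, (√(A t ^ 2 + ε ^ 2) - ε) := by
      apply intervalIntegral.integral_nonneg (by linarith)
      intro t _
      have : ε ≤ √(A t ^ 2 + ε ^ 2) := le_sqrt_of_sq_le (by nlinarith [sq_nonneg (A t)])
      linarith
    have := pow_le_pow_left₀ (le_max_left _ _) (max_le h2 h1) 2
    apply mul_le_mul_of_nonneg_left this (by positivity)
  have hlim : Tendsto (fun ε : ℝ => 36 * π * (max 0 ((∫ t in (-M)..M, |A t|) - 2 * M * ε)) ^ 2)
      (nhdsWithin 0 (Set.Ioi 0)) (nhds (36 * π * (max 0 ((∫ t in (-M)..M, |A t|) - 2 * M * 0)) ^ 2)) := by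
    apply Tendsto.mono_left _ nhdsWithin_le_nhds
    apply Continuous.tendsto
    fun_prop
  have h := le_of_tendsto hlim (eventually_nhdsWithin_of_forall key2)
  rw [mul_zero, sub_zero, max_eq_right hW0] at h
  refine le_trans ?_ h
  apply mul_le_mul_of_nonneg_left _ (by positivity)
  rw [← sq_abs (∫ t in (-M)..M, A t)]
  exact pow_le_pow_left₀ (abs_nonneg _) (intervalIntegral.abs_integral_le_integral_abs (by linarith)) 2

lemma dido_edge (y0 y1 dx l μ θ : ℝ) (hl : 0 ≤ l) (h2 : l ^ 2 = dx ^ 2 + (y1 - y0) ^ 2)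
    (hμ : 0 < μ) (hθ : 0 < θ) (hθ' : θ + μ * l < π) :
    (y0 + y1) / 2 * dx ≤ l / (2 * μ) -
      (y1 ^ 2 * (cos (θ + μ * l) / sin (θ + μ * l)) - y0 ^ 2 * (cos θ / sin θ)) / 2 := by
  rcases hl.eq_or_lt with h0 | h0
  · subst h0
    have h3 : dx = 0 := by nlinarith [sq_nonneg dx, sq_nonneg (y1 - y0)]
    have h4 : y1 = y0 := by nlinarith [sq_nonneg dx, sq_nonneg (y1 - y0)]
    subst h3 h4
    simp
  set m := (y1 - y0) / l with hm
  set e := dx / l with he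
  have hem : e ^ 2 + m ^ 2 = 1 := by
    rw [hm, he]; field_simp; linarith
  have hml : m * l = y1 - y0 := by rw [hm]; field_simp
  have hel : e * l = dx := by rw [he]; field_simp
  let g : ℝ → ℝ := fun s => s / (2 * μ) - (y0 + m * s) ^ 2 * (cos (θ + μ * s) / sin (θ + μ * s)) / 2
      - (y0 * s + m * s ^ 2 / 2) * e
  have hsin : ∀ s ∈ Set.Icc 0 l, 0 < sin (θ + μ * s) := by
    intro s hs
    apply sin_pos_of_pos_of_lt_pi
    · have := mul_nonneg hμ.le hs.1; linarith
    · have := mul_le_mul_of_nonneg_left hs.2 hμ.le; linarith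
  have hder : ∀ s ∈ Set.Icc 0 l, ∃ d, 0 ≤ d ∧ HasDerivAt g d s := by
    intro s hs
    have h1 := hsin s hs
    have hc : HasDerivAt (fun s => θ + μ * s) μ s := by
      simpa using ((hasDerivAt_id s).const_mul μ).const_add θ
    have hy : HasDerivAt (fun s => y0 + m * s) m s := by
      simpa using ((hasDerivAt_id s).const_mul m).const_add y0
    have hq : HasDerivAt (fun s : ℝ => y0 * s + m * s ^ 2 / 2) (y0 + m * s) s := by
      have := ((hasDerivAt_id s).const_mul y0).add ((((hasDerivAt_id s).pow 2).const_mul m).div_const 2)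
      refine this.congr_deriv ?_
      simp; ring
    have := (((hasDerivAt_id s).div_const (2 * μ)).sub
      (((hy.pow 2).mul (hc.cos.div hc.sin h1.ne')).div_const 2)).sub (hq.mul_const e)
    refine ⟨_, ?_, this⟩
    have hsc := sin_sq_add_cos_sq (θ + μ * s)
    set S := sin (θ + μ * s)
    set C := cos (θ + μ * s)
    set Y := y0 + m * s
    have : 1 / (2 * μ) - ((((2:ℕ):ℝ) * Y ^ (2 - 1) * m) * (C / S) +
        Y ^ 2 * ((-S * μ * S - C * (C * μ)) / S ^ 2)) / 2 - Y * e
        = ((m - μ * Y * (C / S)) ^ 2 + (e - μ * Y) ^ 2) / (2 * μ) := by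
      have e1 : (-S * μ * S - C * (C * μ)) / S ^ 2 = - μ * (1 + (C / S) ^ 2) := by
        field_simp; ring
      rw [e1]
      generalize C / S = c
      have : (1:ℝ) = e ^ 2 + m ^ 2 := hem.symm
      rw [show (1:ℝ) / (2 * μ) = (e ^ 2 + m ^ 2) / (2 * μ) by rw [hem]]
      field_simp
      norm_num
      ring
    have h3 : 0 ≤ ((m - μ * Y * (C / S)) ^ 2 + (e - μ * Y) ^ 2) / (2 * μ) := by positivity
    rw [← this] at h3
    simpa using h3
  have hmono : MonotoneOn g (Set.Icc 0 l) := by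
    apply monotoneOn_of_deriv_nonneg (convex_Icc 0 l)
    · intro s hs
      obtain ⟨d, -, hd⟩ := hder s hs
      exact hd.continuousAt.continuousWithinAt
    · intro s hs
      obtain ⟨d, -, hd⟩ := hder s (interior_subset hs)
      exact hd.differentiableAt.differentiableWithinAt
    · intro s hs
      obtain ⟨d, h, hd⟩ := hder s (interior_subset hs)
      rwa [hd.deriv]
  have := hmono (Set.left_mem_Icc.2 hl) (Set.right_mem_Icc.2 hl) hl
  simp only [g] at this
  rw [hml] at this
  have e1 : (y0 * l + m * l ^ 2 / 2) * e = (y0 + y1) / 2 * dx := by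
    rw [← hel]; linear_combination (e * l / 2) * hml
  rw [e1] at this
  simp at this
  linarith

/-- length of the k-th edge -/
noncomputable def elen (x y : ℕ → ℝ) (k : ℕ) : ℝ :=
  √((x (k+1) - x k) ^ 2 + (y (k+1) - y k) ^ 2)

lemma elen_nonneg (x y : ℕ → ℝ) (k : ℕ) : 0 ≤ elen x y k := sqrt_nonneg _

lemma dido_aux (n : ℕ) (x y : ℕ → ℝ) (h0 : y 0 = 0) (hn : y n = 0) (μ : ℝ) (hμ : 0 < μ)
    (hμS : μ * (∑ k ∈ Finset.range n, elen x y k) < π) :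
    ∑ k ∈ Finset.range n, (y k + y (k+1)) / 2 * (x (k+1) - x k) ≤
      (∑ k ∈ Finset.range n, elen x y k) / (2 * μ) := by
  set S := ∑ k ∈ Finset.range n, elen x y k with hS
  set η := (π - μ * S) / 2 with hη
  have hη0 : 0 < η := by rw [hη]; linarith
  have key : ∀ m ≤ n, ∑ k ∈ Finset.range m, (y k + y (k+1)) / 2 * (x (k+1) - x k) ≤
      (∑ k ∈ Finset.range m, elen x y k) / (2 * μ)
      - (y m ^ 2 * (cos (η + μ * ∑ k ∈ Finset.range m, elen x y k)
        / sin (η + μ * ∑ k ∈ Finset.range m, elen x y k))) / 2 := by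
    intro m
    induction m with
    | zero => intro _; simp [h0]
    | succ m ih =>
      intro hm
      have h1 := ih (by omega)
      rw [Finset.sum_range_succ, Finset.sum_range_succ]
      set s := ∑ k ∈ Finset.range m, elen x y k with hs
      have hs0 : 0 ≤ s := Finset.sum_nonneg fun k _ => elen_nonneg x y k
      have hs1 : s + elen x y m ≤ S := by
        rw [hs, hS, ← Finset.sum_range_succ]
        exact Finset.sum_le_sum_of_subset_of_nonneg (Finset.range_mono hm)
          fun k _ _ => elen_nonneg x y k
      have h2 := dido_edge (y m) (y (m+1)) (x (m+1) - x m) (elen x y m) μ (η + μ * s)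
        (elen_nonneg x y m) (by rw [elen, sq_sqrt (by positivity)]) hμ (by positivity)
        (by have := mul_le_mul_of_nonneg_left hs1 hμ.le
            nlinarith)
      rw [show η + μ * (s + elen x y m) = η + μ * s + μ * elen x y m by ring]
      have : (s + elen x y m) / (2 * μ) = s / (2 * μ) + elen x y m / (2 * μ) := by ring
      rw [this]
      linarith
  have := key n le_rfl
  rw [hn] at this
  simpa using this

lemma dido_axis (n : ℕ) (x y : ℕ → ℝ) (h0 : y 0 = 0) (hn : y n = 0) :
    ∑ k ∈ Finset.range n, (y k + y (k+1)) / 2 * (x (k+1) - x k) ≤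
      (∑ k ∈ Finset.range n, elen x y k) ^ 2 / (2 * π) := by
  have haux := dido_aux n x y h0 hn
  set S := ∑ k ∈ Finset.range n, elen x y k with hS
  set W := ∑ k ∈ Finset.range n, (y k + y (k+1)) / 2 * (x (k+1) - x k)
  have hS0 : 0 ≤ S := Finset.sum_nonneg fun k _ => elen_nonneg x y k
  -- W * 2 μ ≤ S for all μ < π / S
  have hπ := pi_pos
  by_contra! hcon
  rw [div_lt_iff₀ (by positivity)] at hcon
  have hW : 0 < W := by nlinarith [sq_nonneg S]
  rcases hS0.eq_or_lt with h | h
  · have := haux (1) (by norm_num) (by rw [← h]; simpa using hπ)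
    rw [← h] at this; simp at this; linarith
  · -- choose μ between S/(2W) and π/S
    have h1 : S / (2 * W) < π / S := by
      rw [div_lt_div_iff₀ (by positivity) h]; nlinarith
    obtain ⟨μ, hμ1, hμ2⟩ := exists_between h1
    have hμ0 : 0 < μ := lt_trans (by positivity) hμ1
    have := haux μ hμ0 (by rwa [lt_div_iff₀ h] at hμ2)
    rw [le_div_iff₀ (by positivity)] at this
    rw [div_lt_iff₀ (by positivity)] at hμ1
    linarith

/-- shoelace sum -/
noncomputable def shoe (x y : ℕ → ℝ) (k : ℕ) : ℝ := x k * y (k+1) - x (k+1) * y k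

lemma dido_rot (n : ℕ) (x y : ℕ → ℝ) (c s : ℝ) (hcs : c ^ 2 + s ^ 2 = 1)
   (hx0 : x 0 = 0) (hy0 : y 0 = 0) (hn : c * y n = s * x n) :
    -∑ k ∈ Finset.range n, shoe x y k ≤
      (∑ k ∈ Finset.range n, elen x y k) ^ 2 / π := by
  have h := dido_axis n (fun k => c * x k + s * y k) (fun k => c * y k - s * x k)
    (by simp [hx0, hy0]) (by simp [hn])
  have he : ∀ k, elen (fun k => c * x k + s * y k) (fun k => c * y k - s * x k) k = elen x y k := by
    intro k
    simp only [elen]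
    congr 1
    linear_combination ((x (k+1) - x k) ^ 2 + (y (k+1) - y k) ^ 2) * hcs
  simp only [he] at h
  have h2 : ∀ m, ∑ k ∈ Finset.range m, ((c * y k - s * x k) + (c * y (k+1) - s * x (k+1))) / 2 *
      ((c * x (k+1) + s * y (k+1)) - (c * x k + s * y k)) = 
      (-∑ k ∈ Finset.range m, shoe x y k) / 2 + (c * y m - s * x m) * (c * x m + s * y m) / 2 := by
    intro m
    induction m with
    | zero => simp [hx0, hy0]
    | succ m ih =>
      rw [Finset.sum_range_succ, Finset.sum_range_succ, ih]
      simp only [shoe]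
      linear_combination (x (m+1) * y m - x m * y (m+1)) / 2 * hcs
  rw [h2, hn] at h
  have h3 : (∑ k ∈ Finset.range n, elen x y k) ^ 2 / π =
     2 * ((∑ k ∈ Finset.range n, elen x y k) ^ 2 / (2 * π)) := by ring
  rw [h3]
  simp at h
  linarith

lemma dido (n : ℕ) (x y : ℕ → ℝ) (hx0 : x 0 = 0) (hy0 : y 0 = 0) :
    |∑ k ∈ Finset.range n, shoe x y k| ≤
      (∑ k ∈ Finset.range n, elen x y k) ^ 2 / π := by
  have main : ∀ x y : ℕ → ℝ, x 0 = 0 → y 0 = 0 → -∑ k ∈ Finset.range n, shoe x y k ≤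
      (∑ k ∈ Finset.range n, elen x y k) ^ 2 / π := by
    intro x y hx0 hy0
    by_cases hz : x n ^ 2 + y n ^ 2 = 0
    · have h1 : x n = 0 := by nlinarith [sq_nonneg (x n), sq_nonneg (y n)]
      have h2 : y n = 0 := by nlinarith [sq_nonneg (x n), sq_nonneg (y n)]
      exact dido_rot n x y 1 0 (by norm_num) hx0 hy0 (by simp [h1, h2])
    · have hp : 0 < x n ^ 2 + y n ^ 2 := lt_of_le_of_ne (by positivity) (Ne.symm hz)
      have hr : √(x n ^ 2 + y n ^ 2) ^ 2 = x n ^ 2 + y n ^ 2 := sq_sqrt hp.le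
      have hr0 := sqrt_pos.2 hp
      set r := √(x n ^ 2 + y n ^ 2)
      exact dido_rot n x y (x n / r) (y n / r) (by field_simp; linarith) hx0 hy0 (by ring)
  rw [abs_le]
  constructor
  · linarith [main x y hx0 hy0]
  · have := main y x hy0 hx0
    have e1 : ∀ k, elen y x k = elen x y k := by intro k; simp only [elen]; rw [add_comm]
    have e2 : ∀ k, shoe y x k = - shoe x y k := by intro k; simp only [shoe]; ring
    simp only [e1, e2] at this
    simpa using this

lemma dido_gen (n : ℕ) (x y : ℕ → ℝ) :
    |∑ k ∈ Finset.range n, shoe x y k - (x 0 * y n - x n * y 0)| ≤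
      (∑ k ∈ Finset.range n, elen x y k) ^ 2 / π := by
  have h := dido n (fun k => x k - x 0) (fun k => y k - y 0) (by simp) (by simp)
  have he : ∀ k, elen (fun k => x k - x 0) (fun k => y k - y 0) k = elen x y k := by
    intro k; simp [elen]
  simp only [he] at h
  have h2 : ∀ m, ∑ k ∈ Finset.range m, shoe (fun k => x k - x 0) (fun k => y k - y 0) k
      = ∑ k ∈ Finset.range m, shoe x y k - (x 0 * y m - x m * y 0) := by
    intro m
    induction m with
    | zero => simp
    | succ m ih =>
      rw [Finset.sum_range_succ, Finset.sum_range_succ, ih]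
      simp only [shoe]; ring
  rwa [h2] at h

lemma exists_half (n : ℕ) (l : ℕ → ℝ) (hl : ∀ k, 0 ≤ l k) (T : ℝ) (hT0 : 0 ≤ T)
    (hT : T ≤ ∑ k ∈ Finset.range n, l k) (hn : 0 < n) :
    ∃ k < n, ∃ c, 0 ≤ c ∧ c ≤ 1 ∧ ∑ j ∈ Finset.range k, l j + c * l k = T := by
  induction n with
  | zero => omega
  | succ n ih =>
    by_cases h : 0 < n ∧ T ≤ ∑ k ∈ Finset.range n, l k
    · obtain ⟨k, hk, c, h1, h2, h3⟩ := ih h.2 h.1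
      exact ⟨k, by omega, c, h1, h2, h3⟩
    · have h' : ∑ k ∈ Finset.range n, l k ≤ T := by
        by_cases h0 : 0 < n
        · push Not at h; exact (h h0).le
        · have : n = 0 := by omega
          subst this; simpa using hT0
      rw [Finset.sum_range_succ] at hT
      refine ⟨n, by omega, (T - ∑ k ∈ Finset.range n, l k) / l n, ?_, ?_, ?_⟩
      · exact div_nonneg (by linarith) (hl n)
      · exact div_le_one_of_le₀ (by linarith) (hl n)
      · by_cases hz : l n = 0
        · rw [hz]; rw [hz] at hT; simp; linarith
        · rw [div_mul_cancel₀ _ hz]; ring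

lemma polygon_isop (n : ℕ) (x y : ℕ → ℝ) (hx : x n = x 0) (hy : y n = y 0) :
    |∑ k ∈ Finset.range n, shoe x y k| ≤
      (∑ k ∈ Finset.range n, elen x y k) ^ 2 / (2 * π) := by
  have hπ := pi_pos
  rcases Nat.eq_zero_or_pos n with h0 | hn
  · subst h0; simp
  set S := ∑ k ∈ Finset.range n, elen x y k with hS
  have hS0 : 0 ≤ S := Finset.sum_nonneg fun k _ => elen_nonneg x y k
  obtain ⟨k, hk, c, hc0, hc1, hc⟩ := exists_half n (elen x y) (elen_nonneg x y) (S / 2)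
    (by linarith) (by linarith) hn
  set a := x k + c * (x (k+1) - x k) with ha
  set b := y k + c * (y (k+1) - y k) with hb
  -- path 1
  have p1 := dido_gen (k+1) (fun j => if j ≤ k then x j else a) (fun j => if j ≤ k then y j else b)
  have p2 := dido_gen (n-k) (fun j => if j = 0 then a else x (k+j)) (fun j => if j = 0 then b else y (k+j))
  rw [Finset.sum_range_succ, Finset.sum_range_succ] at p1
  obtain ⟨m, hm⟩ : ∃ m, n - k = m + 1 := ⟨n - k - 1, by omega⟩
  have hkm : k + (m + 1) = n := by omega
  rw [hm, Finset.sum_range_succ', Finset.sum_range_succ'] at p2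
  have e1 : ∀ j ∈ Finset.range k, shoe (fun j => if j ≤ k then x j else a) (fun j => if j ≤ k then y j else b) j = shoe x y j := by
    intro j hj
    have := Finset.mem_range.1 hj
    simp only [shoe]
    rw [if_pos (by omega), if_pos (by omega), if_pos (by omega), if_pos (by omega)]
  have e2 : ∀ j ∈ Finset.range k, elen (fun j => if j ≤ k then x j else a) (fun j => if j ≤ k then y j else b) j = elen x y j := by
    intro j hj
    have := Finset.mem_range.1 hj
    simp only [elen]
    rw [if_pos (by omega), if_pos (by omega), if_pos (by omega), if_pos (by omega)]
  have e3 : ∀ j, shoe (fun j => if j = 0 then a else x (k+j)) (fun j => if j = 0 then b else y (k+j)) (j+1) = shoe x y (k+(j+1)) := by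
    intro j; simp [shoe]; rfl
  have e4 : ∀ j, elen (fun j => if j = 0 then a else x (k+j)) (fun j => if j = 0 then b else y (k+j)) (j+1) = elen x y (k+(j+1)) := by
    intro j; simp [elen]; rfl
  rw [Finset.sum_congr rfl e1, Finset.sum_congr rfl e2] at p1
  simp only [e3, e4] at p2
  have e5 : elen (fun j => if j ≤ k then x j else a) (fun j => if j ≤ k then y j else b) k = c * elen x y k := by
    simp [elen, ha, hb]
    rw [mul_pow, mul_pow, ← mul_add, sqrt_mul (by positivity), sqrt_sq hc0]
  have e6 : elen (fun j => if j = 0 then a else x (k+j)) (fun j => if j = 0 then b else y (k+j)) 0 = (1 - c) * elen x y k := by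
    simp [elen, ha, hb]
    rw [show (x (k+1) - (x k + c * (x (k+1) - x k))) ^ 2 + (y (k+1) - (y k + c * (y (k+1) - y k))) ^ 2
      = (1 - c) ^ 2 * ((x (k+1) - x k) ^ 2 + (y (k+1) - y k) ^ 2) by ring,
      sqrt_mul (by positivity), sqrt_sq (by linarith)]
  have e7 : shoe (fun j => if j ≤ k then x j else a) (fun j => if j ≤ k then y j else b) k = c * shoe x y k := by
    simp [shoe, ha, hb]; ring
  have e8 : shoe (fun j => if j = 0 then a else x (k+j)) (fun j => if j = 0 then b else y (k+j)) 0 = (1 - c) * shoe x y k := by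
    simp [shoe, ha, hb]; ring
  rw [e5, e7] at p1
  rw [e6, e8] at p2
  have split : ∀ f : ℕ → ℝ, ∑ j ∈ Finset.range n, f j = ∑ j ∈ Finset.range k, f j + (∑ j ∈ Finset.range m, f (k+(j+1)) + f k) := by
    intro f
    rw [← hkm, Finset.sum_range_add, Finset.sum_range_succ' _ m]; simp
  have hlen2 : ∑ j ∈ Finset.range m, elen x y (k+(j+1)) + (1 - c) * elen x y k = S / 2 := by
    have := split (elen x y)
    rw [← hS] at this
    linarith
  rw [hc] at p1
  rw [hlen2] at p2
  rw [split (shoe x y)]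
  simp [hkm, hx, hy] at p1 p2
  have : (S / 2) ^ 2 / π + (S / 2) ^ 2 / π = S ^ 2 / (2 * π) := by field_simp; ring
  rw [← this]
  refine le_trans ?_ (add_le_add p1 p2)
  refine le_trans (le_of_eq ?_) (abs_add_le _ _)
  congr 1
  ring

lemma perm_isop {F : Type*} [Fintype F] [DecidableEq F] (σ : Equiv.Perm F) (X Y : F → ℝ) :
    |∑ e, (X e * Y (σ e) - X (σ e) * Y e)| ≤
      (∑ e, √((X (σ e) - X e) ^ 2 + (Y (σ e) - Y e) ^ 2)) ^ 2 / (2 * π) := by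
  have hπ := pi_pos
  induction σ using Equiv.Perm.cycle_induction_on with
  | base_one => simp [mul_comm]
  | base_cycles σ hσ =>
    obtain ⟨e0, he0, hcyc⟩ := hσ
    have hσ : σ.IsCycle := ⟨e0, he0, hcyc⟩
    set n := orderOf σ with hn
    have hn' : n = σ.support.card := hσ.orderOf
    have himg : (Finset.range n).image (fun k => (σ ^ k) e0) = σ.support := by
      apply Finset.Subset.antisymm
      · intro e he
        obtain ⟨k, -, rfl⟩ := Finset.mem_image.1 he
        exact Equiv.Perm.pow_apply_mem_support.2 (Equiv.Perm.mem_support.2 he0)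
      · intro e he
        obtain ⟨k, hk, rfl⟩ := (hcyc (Equiv.Perm.mem_support.1 he)).exists_pow_eq'
        refine Finset.mem_image.2 ⟨k, Finset.mem_range.2 ?_, rfl⟩
        exact hk
    have hinj : Set.InjOn (fun k => (σ ^ k) e0) (Finset.range n : Set ℕ) := by
      apply Finset.injOn_of_card_image_eq
      rw [himg, Finset.card_range, hn']
    have hsum : ∀ g : F → ℝ, (∀ e, σ e = e → g e = 0) →
        ∑ e, g e = ∑ k ∈ Finset.range n, g ((σ ^ k) e0) := by
      intro g hg
      rw [← Finset.sum_image (f := g) hinj, himg]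
      symm
      apply Finset.sum_subset (Finset.subset_univ _)
      intro e _ he
      exact hg e (by simpa using he)
    rw [hsum _ (by intro e he; rw [he]; ring), hsum _ (by intro e he; rw [he]; simp)]
    have := polygon_isop n (fun k => X ((σ ^ k) e0)) (fun k => Y ((σ ^ k) e0))
      (by simp [hn, pow_orderOf_eq_one]) (by simp [hn, pow_orderOf_eq_one])
    simp only [shoe, elen, fun k => pow_succ' σ k, Equiv.Perm.mul_apply] at this
    exact this
  | induction_disjoint σ τ hd hc h1 h2 =>
    have key : ∀ g : F → F → ℝ, (∀ e, g e e = 0) → ∑ e, g e ((σ * τ) e) = ∑ e, g e (σ e) + ∑ e, g e (τ e) := by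
      intro g hg
      rw [← Finset.sum_add_distrib]
      apply Finset.sum_congr rfl
      intro e _
      rcases hd e with h | h
      · have : σ (τ e) = τ e := by
          rcases hd (τ e) with h' | h'
          · exact h'
          · have := τ.injective h'
            rw [this, h]
        rw [Equiv.Perm.mul_apply, this, h, hg]; ring
      · rw [Equiv.Perm.mul_apply, h, hg]; ring
    rw [key (fun e e' => X e * Y e' - X e' * Y e) (by intro e; ring),
      key (fun e e' => √((X e' - X e) ^ 2 + (Y e' - Y e) ^ 2)) (by intro e; simp)]
    refine (abs_add_le _ _).trans ((add_le_add h1 h2).trans ?_)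
    rw [← add_div]
    apply div_le_div_of_nonneg_right _ (by positivity)
    have a1 : 0 ≤ ∑ e, √((X (σ e) - X e) ^ 2 + (Y (σ e) - Y e) ^ 2) := Finset.sum_nonneg fun _ _ => sqrt_nonneg _
    have a2 : 0 ≤ ∑ e, √((X (τ e) - X e) ^ 2 + (Y (τ e) - Y e) ^ 2) := Finset.sum_nonneg fun _ _ => sqrt_nonneg _
    nlinarith

lemma hasDerivAt_max_pow (n : ℕ) (a t : ℝ) :
    HasDerivAt (fun t => max (a - t) 0 ^ (n + 2)) (-((n + 2 : ℕ) : ℝ) * max (a - t) 0 ^ (n + 1)) t := by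
  have hmain : HasDerivAt (fun t => (a - t) ^ (n + 2)) (-((n + 2 : ℕ) : ℝ) * (a - t) ^ (n + 1)) t := by
    have := ((hasDerivAt_id t).const_sub a).pow (n + 2)
    refine this.congr_deriv ?_
    simp
    ring
  rcases lt_trichotomy t a with h | h | h
  · rw [max_eq_left (by linarith)]
    apply hmain.congr_of_eventuallyEq
    filter_upwards [eventually_lt_nhds h] with s hs
    rw [max_eq_left (by linarith)]
  · subst h
    rw [← hasDerivWithinAt_univ, ← Set.Iic_union_Ici (a := t)]
    apply HasDerivWithinAt.union
    · have h1 := hmain.hasDerivWithinAt (s := Set.Iic t)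
      simp only [sub_self, max_self] at h1 ⊢
      apply h1.congr
      · intro s hs
        rw [max_eq_left (by simpa using hs)]
      · simp
    · have h1 := hasDerivWithinAt_const t (Set.Ici t) (0:ℝ)
      simp only [sub_self, max_self]
      apply (h1.congr _ _).congr_deriv
      · simp
      · intro s hs
        rw [max_eq_right (by simpa using hs)]; simp
      · simp
  · rw [max_eq_right (by linarith)]
    simp only [ne_eq, Nat.add_eq_zero_iff, one_ne_zero, and_false, not_false_eq_true, zero_pow, mul_zero]
    apply (hasDerivAt_const t (0:ℝ)).congr_of_eventuallyEq
    filter_upwards [eventually_gt_nhds h] with s hs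
    rw [max_eq_right (by linarith)]; simp

/-- divided difference of `(z - t)_+ ^ n` -/
noncomputable def ddf (n : ℕ) (a b c t : ℝ) : ℝ :=
  max (a - t) 0 ^ n / ((a - b) * (a - c)) + max (b - t) 0 ^ n / ((b - c) * (b - a)) +
    max (c - t) 0 ^ n / ((c - a) * (c - b))

lemma ddf_cyc (n : ℕ) (a b c t : ℝ) : ddf n b c a t = ddf n a b c t := by
  simp only [ddf]; ring

lemma ddf_deriv (n : ℕ) (a b c t : ℝ) :
    HasDerivAt (ddf (n + 2) a b c) (-((n + 2 : ℕ) : ℝ) * ddf (n + 1) a b c t) t := by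
  have := (((hasDerivAt_max_pow n a t).div_const ((a - b) * (a - c))).add
    ((hasDerivAt_max_pow n b t).div_const ((b - c) * (b - a)))).add
    ((hasDerivAt_max_pow n c t).div_const ((c - a) * (c - b)))
  refine this.congr_deriv ?_
  simp only [ddf]; ring

lemma ddf_cont (n : ℕ) (a b c : ℝ) : Continuous (ddf n a b c) := by
  unfold ddf; fun_prop

lemma ddf_above (n : ℕ) (hn : n ≠ 0) (a b c t : ℝ) (ha : a ≤ t) (hb : b ≤ t) (hc : c ≤ t) : ddf n a b c t = 0 := by
  simp [ddf, max_eq_right (sub_nonpos.2 ha), max_eq_right (sub_nonpos.2 hb), max_eq_right (sub_nonpos.2 hc), hn]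

lemma ddf_below (n : ℕ) (a b c t : ℝ) (ha : t ≤ a) (hb : t ≤ b) (hc : t ≤ c) : ddf n a b c t =
    (a - t) ^ n / ((a - b) * (a - c)) + (b - t) ^ n / ((b - c) * (b - a)) +
    (c - t) ^ n / ((c - a) * (c - b)) := by
  simp [ddf, max_eq_left (sub_nonneg.2 ha), max_eq_left (sub_nonneg.2 hb), max_eq_left (sub_nonneg.2 hc)]

lemma ddf_one_b (n : ℕ) (hn : n ≠ 0) (a b c t : ℝ) (ha : a ≤ t) (hb : t ≤ b) (hc : c ≤ t) : ddf n a b c t =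
    (b - t) ^ n / ((b - c) * (b - a)) := by
  simp [ddf, max_eq_right (sub_nonpos.2 ha), max_eq_left (sub_nonneg.2 hb), max_eq_right (sub_nonpos.2 hc), hn]

lemma ddf_two_bc (n : ℕ) (hn : n ≠ 0) (a b c t : ℝ) (ha : a ≤ t) (hb : t ≤ b) (hc : t ≤ c) : ddf n a b c t =
    (b - t) ^ n / ((b - c) * (b - a)) + (c - t) ^ n / ((c - a) * (c - b)) := by
  simp [ddf, max_eq_right (sub_nonpos.2 ha), max_eq_left (sub_nonneg.2 hb), max_eq_left (sub_nonneg.2 hc), hn]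

/-- Reduction by cyclic symmetry of sign patterns -/
lemma sign_cases (t : ℝ) (P : ℝ → ℝ → ℝ → Prop) (hcyc : ∀ a b c, P b c a → P a b c)
    (h0 : ∀ a b c, a ≤ t → b ≤ t → c ≤ t → P a b c) (h3 : ∀ a b c, t ≤ a → t ≤ b → t ≤ c → P a b c)
    (h1 : ∀ a b c, a ≤ t → t ≤ b → c ≤ t → P a b c) (h2 : ∀ a b c, a ≤ t → t ≤ b → t ≤ c → P a b c)
    (a b c : ℝ) : P a b c := by
  rcases le_total a t with ha | ha <;> rcases le_total b t with hb | hb <;>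
    rcases le_total c t with hc | hc
  · exact h0 _ _ _ ha hb hc
  · exact hcyc _ _ _ (h1 _ _ _ hb hc ha)
  · exact h1 _ _ _ ha hb hc
  · exact h2 _ _ _ ha hb hc
  · exact hcyc _ _ _ (hcyc _ _ _ (h1 _ _ _ hc ha hb))
  · exact hcyc _ _ _ (h2 _ _ _ hb hc ha)
  · exact hcyc _ _ _ (hcyc _ _ _ (h2 _ _ _ hc ha hb))
  · exact h3 _ _ _ ha hb hc

lemma ddf_nonneg (a b c t : ℝ) (hab : a ≠ b) (hbc : b ≠ c) (hca : c ≠ a) : 0 ≤ ddf 1 a b c t := by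
  have := sign_cases t (fun a b c => a ≠ b → b ≠ c → c ≠ a → 0 ≤ ddf 1 a b c t) ?_ ?_ ?_ ?_ ?_ a b c
  · exact this hab hbc hca
  · intro a b c h h1 h2 h3
    rw [← ddf_cyc]; exact h h2 h3 h1
  · intro a b c ha hb hc _ _ _
    rw [ddf_above 1 one_ne_zero a b c t ha hb hc]
  · intro a b c ha hb hc h1 h2 h3
    rw [ddf_below 1 a b c t ha hb hc]
    have := sub_ne_zero.2 h1
    have := sub_ne_zero.2 h2
    have := sub_ne_zero.2 h3
    have := sub_ne_zero.2 h1.symm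
    have := sub_ne_zero.2 h2.symm
    have := sub_ne_zero.2 h3.symm
    apply le_of_eq
    rw [show b - a = -(a - b) by ring, show c - b = -(b - c) by ring, show a - c = -(c - a) by ring]
    field_simp
    ring
  · intro a b c ha hb hc _ _ _
    rw [ddf_one_b 1 one_ne_zero a b c t ha hb hc, pow_one]
    exact div_nonneg (by linarith) (mul_nonneg (by linarith) (by linarith))
  · intro a b c ha hb hc h1 h2 h3
    rw [ddf_two_bc 1 one_ne_zero a b c t ha hb hc, pow_one, pow_one]
    have := sub_ne_zero.2 h1
    have := sub_ne_zero.2 h2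
    have := sub_ne_zero.2 h3
    have e : (b - t) / ((b - c) * (b - a)) + (c - t) / ((c - a) * (c - b)) = (t - a) / ((b - a) * (c - a)) := by
      rw [show b - a = -(a - b) by ring, show c - b = -(b - c) by ring]
      field_simp
      ring
    rw [e]
    exact div_nonneg (by linarith) (mul_nonneg (by linarith) (by linarith))

lemma ddf_below2 (a b c t : ℝ) (hab : a ≠ b) (hbc : b ≠ c) (hca : c ≠ a)
    (ha : t ≤ a) (hb : t ≤ b) (hc : t ≤ c) : ddf 2 a b c t = 1 := by
  rw [ddf_below 2 a b c t ha hb hc]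
  have := sub_ne_zero.2 hab
  have := sub_ne_zero.2 hbc
  have := sub_ne_zero.2 hca
  rw [show b - a = -(a - b) by ring, show c - b = -(b - c) by ring, show a - c = -(c - a) by ring]
  field_simp
  ring

lemma ddf_below3 (a b c t : ℝ) (hab : a ≠ b) (hbc : b ≠ c) (hca : c ≠ a)
    (ha : t ≤ a) (hb : t ≤ b) (hc : t ≤ c) : ddf 3 a b c t = a + b + c - 3 * t := by
  rw [ddf_below 3 a b c t ha hb hc]
  have := sub_ne_zero.2 hab
  have := sub_ne_zero.2 hbc
  have := sub_ne_zero.2 hca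
  rw [show b - a = -(a - b) by ring, show c - b = -(b - c) by ring, show a - c = -(c - a) by ring]
  field_simp
  ring

lemma ddf_int1 (a b c M : ℝ) (hab : a ≠ b) (hbc : b ≠ c) (hca : c ≠ a)
    (ha : |a| ≤ M) (hb : |b| ≤ M) (hc : |c| ≤ M) : ∫ t in (-M)..M, ddf 1 a b c t = 1 / 2 := by
  rw [abs_le] at ha hb hc
  have := intervalIntegral.integral_eq_sub_of_hasDerivAt (a := -M) (b := M) 
    (fun t _ => ddf_deriv 0 a b c t) (((ddf_cont 1 a b c).const_mul _).intervalIntegrable _ _)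
  rw [intervalIntegral.integral_const_mul, ddf_above _ (by norm_num) a b c M ha.2 hb.2 hc.2,
    ddf_below2 a b c _ hab hbc hca ha.1 hb.1 hc.1] at this
  norm_num at this
  linarith

lemma ddf_int2 (a b c M : ℝ) (hab : a ≠ b) (hbc : b ≠ c) (hca : c ≠ a)
    (ha : |a| ≤ M) (hb : |b| ≤ M) (hc : |c| ≤ M) :
    ∫ t in (-M)..M, ddf 2 a b c t = (a + b + c) / 3 + M := by
  rw [abs_le] at ha hb hc
  have := intervalIntegral.integral_eq_sub_of_hasDerivAt (a := -M) (b := M) 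
    (fun t _ => ddf_deriv 1 a b c t) (((ddf_cont 2 a b c).const_mul _).intervalIntegrable _ _)
  rw [intervalIntegral.integral_const_mul, ddf_above _ (by norm_num) a b c M ha.2 hb.2 hc.2,
    ddf_below3 a b c _ hab hbc hca ha.1 hb.1 hc.1] at this
  norm_num at this
  linarith

/-- linear interpolation: point of the segment at height `t` -/
noncomputable def lint (t a x b y : ℝ) : ℝ := x + (t - a) / (b - a) * (y - x)

lemma lint_symm (t a x b y : ℝ) (h : a ≠ b) : lint t b y a x = lint t a x b y := by
  have := sub_ne_zero.2 h
  have := sub_ne_zero.2 h.symm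
  simp only [lint]
  rw [show b - a = -(a - b) by ring]
  field_simp
  ring

lemma seg1 (t a b c x y w : ℝ) (ha : a < t) (hb : t < b) (hc : c < t) :
    lint t b y c w - lint t a x b y = ddf 1 a b c t * (x * (c - b) + y * (a - c) + w * (b - a)) := by
  rw [ddf_one_b 1 one_ne_zero a b c t ha.le hb.le hc.le, ← lint_symm t b y c w (by linarith)]
  simp only [lint]
  have : b - a ≠ 0 := by linarith
  have : b - c ≠ 0 := by linarith
  field_simp
  ring

lemma seg2 (t a b c x y w : ℝ) (ha : a < t) (hb : t < b) (hc : t < c) (hbc : b ≠ c) :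
    lint t c w a x - lint t a x b y = ddf 1 a b c t * (x * (c - b) + y * (a - c) + w * (b - a)) := by
  rw [ddf_two_bc 1 one_ne_zero a b c t ha.le hb.le hc.le, lint_symm t a x c w (by linarith)]
  simp only [lint]
  have : b - a ≠ 0 := by linarith
  have : c - a ≠ 0 := by linarith
  have := sub_ne_zero.2 hbc
  rw [show c - b = -(b - c) by ring]
  field_simp
  ring

/-- planar cross product -/
def cr (x y x' y' : ℝ) : ℝ := x * y' - x' * y

/-- contribution of the part of an edge above level `t` -/
noncomputable def clip (t a x y a' x' y' : ℝ) : ℝ :=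
  if a < t then (if a' < t then 0 else cr (lint t a x a' x') (lint t a y a' y') x' y')
  else (if a' < t then cr x y (lint t a x a' x') (lint t a y a' y') else cr x y x' y')

/-- contribution of the level segment in a triangle, seen from the up-going edge -/
noncomputable def gseg (t a x y a' x' y' a'' x'' y'' : ℝ) : ℝ :=
  if a < t ∧ t < a' then
    (if a'' < t then cr (lint t a x a' x') (lint t a y a' y') (lint t a' x' a'' x'') (lint t a' y' a'' y'')
     else cr (lint t a x a' x') (lint t a y a' y') (lint t a'' x'' a x) (lint t a'' y'' a y))
  else 0

/-- twice the signed projected area of a triangle -/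
def nz (x y x' y' x'' y'' : ℝ) : ℝ := cr x y x' y' + cr x' y' x'' y'' + cr x'' y'' x y

lemma clip_anti (t a x y a' x' y' : ℝ) (h : a ≠ a') :
    clip t a' x' y' a x y = - clip t a x y a' x' y' := by
  simp only [clip, cr]
  rw [lint_symm t a x a' x' h, lint_symm t a y a' y' h]
  split_ifs <;> ring

lemma tri1 (t a x y a' x' y' a'' x'' y'' : ℝ) (h : a < t) (h' : t < a') (h'' : a'' < t) :
    gseg t a x y a' x' y' a'' x'' y'' + gseg t a' x' y' a'' x'' y'' a x y + gseg t a'' x'' y'' a x y a' x' y'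
    = clip t a x y a' x' y' + clip t a' x' y' a'' x'' y'' + clip t a'' x'' y'' a x y
      - nz x y x' y' x'' y'' * ddf 2 a a' a'' t := by
  rw [ddf_one_b 2 two_ne_zero a a' a'' t h.le h'.le h''.le]
  simp only [gseg, clip, h, h', h'', not_lt.2 h.le, not_lt.2 h'.le, not_lt.2 h''.le, and_true, true_and, and_false, false_and, if_true, if_false]
  simp only [cr, nz]
  rw [← lint_symm t a' x' a'' x'' (by linarith), ← lint_symm t a' y' a'' y'' (by linarith)]
  simp only [lint]
  have : a' - a ≠ 0 := by linarith
  have : a' - a'' ≠ 0 := by linarith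
  field_simp
  ring

lemma tri2 (t a x y a' x' y' a'' x'' y'' : ℝ) (h : a < t) (h' : t < a') (h'' : t < a'') (hne : a' ≠ a'') :
    gseg t a x y a' x' y' a'' x'' y'' + gseg t a' x' y' a'' x'' y'' a x y + gseg t a'' x'' y'' a x y a' x' y'
    = clip t a x y a' x' y' + clip t a' x' y' a'' x'' y'' + clip t a'' x'' y'' a x y
      - nz x y x' y' x'' y'' * ddf 2 a a' a'' t := by
  rw [ddf_two_bc 2 two_ne_zero a a' a'' t h.le h'.le h''.le]
  simp only [gseg, clip, h, h', h'', not_lt.2 h.le, not_lt.2 h'.le, not_lt.2 h''.le, and_true, true_and, and_false, false_and, if_true, if_false]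
  simp only [cr, nz]
  rw [lint_symm t a x a'' x'' (by linarith), lint_symm t a y a'' y'' (by linarith)]
  simp only [lint]
  have : a' - a ≠ 0 := by linarith
  have : a'' - a ≠ 0 := by linarith
  have := sub_ne_zero.2 hne
  rw [show a'' - a' = -(a' - a'') by ring]
  field_simp
  ring

lemma nz_cyc (x y x' y' x'' y'' : ℝ) : nz x' y' x'' y'' x y = nz x y x' y' x'' y'' := by
  simp only [nz]; ring

lemma tri_id (t a x y a' x' y' a'' x'' y'' : ℝ) (h : a ≠ t) (h' : a' ≠ t) (h'' : a'' ≠ t)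
    (h1 : a ≠ a') (h2 : a' ≠ a'') (h3 : a'' ≠ a) :
    gseg t a x y a' x' y' a'' x'' y'' + gseg t a' x' y' a'' x'' y'' a x y + gseg t a'' x'' y'' a x y a' x' y'
    = clip t a x y a' x' y' + clip t a' x' y' a'' x'' y'' + clip t a'' x'' y'' a x y
      - nz x y x' y' x'' y'' * ddf 2 a a' a'' t := by
  have c1 := nz_cyc x y x' y' x'' y''
  have c2 := nz_cyc x' y' x'' y'' x y
  have d1 := ddf_cyc 2 a a' a'' t
  have d2 := ddf_cyc 2 a' a'' a t
  rcases lt_or_gt_of_ne h with h | h <;> rcases lt_or_gt_of_ne h' with h' | h' <;>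
    rcases lt_or_gt_of_ne h'' with h'' | h''
  · rw [ddf_above 2 two_ne_zero a a' a'' t h.le h'.le h''.le]
    simp only [gseg, clip, h, h', h'', not_lt.2 h.le, not_lt.2 h'.le, not_lt.2 h''.le, and_true, true_and, and_false, false_and, if_true, if_false]
    simp
  · have := tri1 t a' x' y' a'' x'' y'' a x y h' h'' h
    rw [c1, d1] at this; linarith
  · exact tri1 t a x y a' x' y' a'' x'' y'' h h' h''
  · exact tri2 t a x y a' x' y' a'' x'' y'' h h' h'' h2
  · have := tri1 t a'' x'' y'' a x y a' x' y' h'' h h'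
    rw [c2, d2, c1, d1] at this; linarith
  · have := tri2 t a' x' y' a'' x'' y'' a x y h' h'' h h3
    rw [c1, d1] at this; linarith
  · have := tri2 t a'' x'' y'' a x y a' x' y' h'' h h' h1
    rw [c2, d2, c1, d1] at this; linarith
  · rw [ddf_below2 a a' a'' t h1 h2 h3 h.le h'.le h''.le]
    simp only [gseg, clip, h, h', h'', not_lt.2 h.le, not_lt.2 h'.le, not_lt.2 h''.le, and_true, true_and, and_false, false_and, if_true, if_false]
    simp [nz]

/-- one third weighting: indicator of up-going edges in a triangle -/
lemma up_count (t a a' a'' K : ℝ) (h : a ≠ t) (h' : a' ≠ t) (h'' : a'' ≠ t)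
    (h1 : a ≠ a') (h2 : a' ≠ a'') (h3 : a'' ≠ a) :
    (if a < t ∧ t < a' then ddf 1 a a' a'' t * K else 0) + (if a' < t ∧ t < a'' then ddf 1 a a' a'' t * K else 0)
     + (if a'' < t ∧ t < a then ddf 1 a a' a'' t * K else 0) = ddf 1 a a' a'' t * K := by
  rcases lt_or_gt_of_ne h with h | h <;> rcases lt_or_gt_of_ne h' with h' | h' <;>
    rcases lt_or_gt_of_ne h'' with h'' | h'' <;> 
    simp only [h, h', h'', not_lt.2 h.le, not_lt.2 h'.le, not_lt.2 h''.le, and_true, true_and, and_false, false_and, if_true, if_false, add_zero, zero_add]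
  · rw [ddf_above 1 one_ne_zero a a' a'' t h.le h'.le h''.le]; simp
  · rw [ddf_below 1 a a' a'' t h.le h'.le h''.le]
    have := sub_ne_zero.2 h1
    have := sub_ne_zero.2 h2
    have := sub_ne_zero.2 h3
    rw [show a' - a = -(a - a') by ring, show a'' - a' = -(a' - a'') by ring, show a - a'' = -(a'' - a) by ring]
    field_simp
    ring

section surf
variable {F : Type*} [Fintype F] [DecidableEq F]

lemma sum_cyc (φ : Equiv.Perm F) (g : F → ℝ) :
    3 * ∑ e, g e = ∑ e, (g e + g (φ e) + g (φ (φ e))) := by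
  rw [Finset.sum_add_distrib, Finset.sum_add_distrib, Equiv.sum_comp φ g,
    Equiv.sum_comp φ (fun e => g (φ e)), Equiv.sum_comp φ g]
  ring

lemma sum_anti (α : F → F) (hα : Function.Involutive α) (g : F → ℝ) (hg : ∀ e, g (α e) = - g e) :
    ∑ e, g e = 0 := by
  have h : ∑ e, g (α e) = ∑ e, g e := Equiv.sum_comp (hα.toPerm α) g
  simp only [hg, Finset.sum_neg_distrib] at h
  linarith

lemma step_perm (φ : Equiv.Perm F) (hφ : ∀ e, φ (φ (φ e)) = e)
    (α : F → F) (hα : Function.Involutive α) (z : F → ℝ) (hzα : ∀ e, z (α e) = z (φ e))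
    (t : ℝ) (ht : ∀ e, z e ≠ t) :
    ∃ σ : Equiv.Perm F, ∀ e, σ e = if z e < t ∧ t < z (φ e) then
      (if z (φ (φ e)) < t then α (φ e) else α (φ (φ e))) else e := by
  have hzα' : ∀ e, z (φ (α e)) = z e := fun e => by rw [← hzα, hα]
  let s : F → F := fun e => if z e < t ∧ t < z (φ e) then
      (if z (φ (φ e)) < t then α (φ e) else α (φ (φ e))) else e
  have hup : ∀ e, (z e < t ∧ t < z (φ e)) → (z (s e) < t ∧ t < z (φ (s e))) := by
    intro e he
    simp only [s, if_pos he]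
    split_ifs with h
    · rw [hzα, hzα']; exact ⟨h, he.2⟩
    · rw [hzα, hzα', hφ]; exact ⟨he.1, lt_of_le_of_ne (not_lt.1 h) (ht _).symm⟩
  have hinj : Function.Injective s := by
    intro e e' h
    by_cases he : z e < t ∧ t < z (φ e) <;> by_cases he' : z e' < t ∧ t < z (φ e')
    · simp only [s, if_pos he, if_pos he'] at h
      split_ifs at h with h1 h2 h2
      · exact φ.injective (hα.injective h)
      · have h3 := φ.injective (hα.injective h)
        rw [h3] at he; linarith [he.1, he'.2]
      · have h3 := φ.injective (hα.injective h)
        rw [← h3] at he'; linarith [he'.1, he.2]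
      · exact φ.injective (φ.injective (hα.injective h))
    · have := hup e he
      rw [h] at this
      simp only [s, if_neg he'] at this
      exact absurd this he'
    · have := hup e' he'
      rw [← h] at this
      simp only [s, if_neg he] at this
      exact absurd this he
    · simpa only [s, if_neg he, if_neg he'] using h
  exact ⟨Equiv.ofBijective s (Finite.injective_iff_bijective.1 hinj), fun e => rfl⟩

/-- horizontal normal component -/
def wv (a x a' x' a'' x'' : ℝ) : ℝ := x * (a'' - a') + x' * (a - a'') + x'' * (a' - a)

lemma wv_cyc (a x a' x' a'' x'' : ℝ) : wv a' x' a'' x'' a x = wv a x a' x' a'' x'' := by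
  simp only [wv]; ring

lemma level_isop (φ : Equiv.Perm F) (hφ : ∀ e, φ (φ (φ e)) = e)
    (α : F → F) (hα : Function.Involutive α) (x y z : F → ℝ) (hxα : ∀ e, x (α e) = x (φ e))
    (hyα : ∀ e, y (α e) = y (φ e)) (hzα : ∀ e, z (α e) = z (φ e)) (hz : ∀ e, z e ≠ z (φ e))
    (t : ℝ) (ht : ∀ e, z e ≠ t) :
    4 * π * |(1 / 6) * ∑ e, nz (x e) (y e) (x (φ e)) (y (φ e)) (x (φ (φ e))) (y (φ (φ e))) *
        ddf 2 (z e) (z (φ e)) (z (φ (φ e))) t| ≤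
      ((1 / 3) * ∑ e, ddf 1 (z e) (z (φ e)) (z (φ (φ e))) t *
        √(wv (z e) (x e) (z (φ e)) (x (φ e)) (z (φ (φ e))) (x (φ (φ e))) ^ 2 +
          wv (z e) (y e) (z (φ e)) (y (φ e)) (z (φ (φ e))) (y (φ (φ e))) ^ 2)) ^ 2 := by
  have hπ := pi_pos
  have hz3 : ∀ e, z (φ (φ e)) ≠ z e := fun e => by
    have := hz (φ (φ e)); rwa [hφ] at this
  have hxα' : ∀ e, x (φ (α e)) = x e := fun e => by rw [← hxα, hα]
  have hyα' : ∀ e, y (φ (α e)) = y e := fun e => by rw [← hyα, hα]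
  have hzα' : ∀ e, z (φ (α e)) = z e := fun e => by rw [← hzα, hα]
  obtain ⟨σ, hσ⟩ := step_perm φ hφ α hα z hzα t ht
  let X : F → ℝ := fun e => lint t (z e) (x e) (z (φ e)) (x (φ e))
  let Y : F → ℝ := fun e => lint t (z e) (y e) (z (φ e)) (y (φ e))
  have hXα : ∀ e, X (α e) = X e := fun e => by
    simp only [X, hxα, hxα', hzα, hzα']; exact lint_symm _ _ _ _ _ (hz e)
  have hYα : ∀ e, Y (α e) = Y e := fun e => by
    simp only [Y, hyα, hyα', hzα, hzα']; exact lint_symm _ _ _ _ _ (hz e)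
  have main := perm_isop σ X Y
  have hsum1 : ∑ e, (X e * Y (σ e) - X (σ e) * Y e) =
      -(1 / 3) * ∑ e, nz (x e) (y e) (x (φ e)) (y (φ e)) (x (φ (φ e))) (y (φ (φ e))) *
        ddf 2 (z e) (z (φ e)) (z (φ (φ e))) t := by
    let G : F → ℝ := fun e => gseg t (z e) (x e) (y e) (z (φ e)) (x (φ e)) (y (φ e))
      (z (φ (φ e))) (x (φ (φ e))) (y (φ (φ e)))
    let C : F → ℝ := fun e => clip t (z e) (x e) (y e) (z (φ e)) (x (φ e)) (y (φ e))
    have h1 : ∀ e, X e * Y (σ e) - X (σ e) * Y e = G e := by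
      intro e
      simp only [G, gseg]
      rw [hσ]
      split_ifs with h h'
      · rw [hXα, hYα]; rfl
      · rw [hXα, hYα]; simp only [X, Y, hφ]; rfl
      · ring
    have h2 : ∑ e, C e = 0 := by
      apply sum_anti α hα
      intro e
      simp only [C, hxα, hxα', hyα, hyα', hzα, hzα']
      exact clip_anti _ _ _ _ _ _ _ (hz e)
    have h3 := sum_cyc φ G
    have h4 : ∀ e, G e + G (φ e) + G (φ (φ e)) = C e + C (φ e) + C (φ (φ e)) -
       nz (x e) (y e) (x (φ e)) (y (φ e)) (x (φ (φ e))) (y (φ (φ e))) *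
        ddf 2 (z e) (z (φ e)) (z (φ (φ e))) t := by
      intro e
      simp only [G, C, hφ]
      exact tri_id _ _ _ _ _ _ _ _ _ _ (ht _) (ht _) (ht _) (hz _) (hz _) (hz3 _)
    simp only [h4] at h3
    rw [Finset.sum_sub_distrib, ← sum_cyc φ C, h2] at h3
    simp only [h1]
    linarith
  have hsum2 : ∑ e, √((X (σ e) - X e) ^ 2 + (Y (σ e) - Y e) ^ 2) =
      (1 / 3) * ∑ e, ddf 1 (z e) (z (φ e)) (z (φ (φ e))) t *
        √(wv (z e) (x e) (z (φ e)) (x (φ e)) (z (φ (φ e))) (x (φ (φ e))) ^ 2 +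
          wv (z e) (y e) (z (φ e)) (y (φ e)) (z (φ (φ e))) (y (φ (φ e))) ^ 2) := by
    let K : F → ℝ := fun e => √(wv (z e) (x e) (z (φ e)) (x (φ e)) (z (φ (φ e))) (x (φ (φ e))) ^ 2 +
          wv (z e) (y e) (z (φ e)) (y (φ e)) (z (φ (φ e))) (y (φ (φ e))) ^ 2)
    let p : F → ℝ := fun e => ddf 1 (z e) (z (φ e)) (z (φ (φ e))) t
    have hK : ∀ e, K (φ e) = K e := fun e => by simp only [K, hφ, wv_cyc]
    have hp : ∀ e, p (φ e) = p e := fun e => by simp only [p, hφ, ddf_cyc]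
    have hp0 : ∀ e, 0 ≤ p e := fun e => ddf_nonneg _ _ _ _ (hz _) (hz _) (hz3 _)
    let G : F → ℝ := fun e => if z e < t ∧ t < z (φ e) then p e * K e else 0
    have h1 : ∀ e, √((X (σ e) - X e) ^ 2 + (Y (σ e) - Y e) ^ 2) = G e := by
      intro e
      have hs : ∀ a b : ℝ, √((p e * a) ^ 2 + (p e * b) ^ 2) = p e * √(a ^ 2 + b ^ 2) := by
        intro a b
        rw [mul_pow, mul_pow, ← mul_add, sqrt_mul (by positivity), sqrt_sq (hp0 e)]
      simp only [G, K]
      rw [hσ]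
      split_ifs with h h'
      · rw [hXα, hYα, ← hs]
        simp only [X, Y]
        rw [seg1 _ _ _ _ _ _ _ h.1 h.2 h', seg1 _ _ _ _ _ _ _ h.1 h.2 h']
        rfl
      · have h'' := lt_of_le_of_ne (not_lt.1 h') (ht _).symm
        rw [hXα, hYα, ← hs]
        simp only [X, Y, hφ]
        rw [seg2 _ _ _ _ _ _ _ h.1 h.2 h'' (hz _), seg2 _ _ _ _ _ _ _ h.1 h.2 h'' (hz _)]
        rfl
      · simp
    have h3 := sum_cyc φ G
    have h4 : ∀ e, G e + G (φ e) + G (φ (φ e)) = p e * K e := by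
      intro e
      simp only [G, hφ, hK, hp]
      exact up_count _ _ _ _ _ (ht _) (ht _) (ht _) (hz _) (hz _) (hz3 _)
    simp only [h4] at h3
    simp only [h1]
    change _ = 1 / 3 * ∑ e, p e * K e
    linarith
  rw [hsum1, hsum2, le_div_iff₀ (by positivity), abs_mul] at main
  rw [abs_mul]
  refine le_trans (le_of_eq ?_) main
  norm_num [abs_of_pos]
  ring

end surf
section surf
variable {F : Type*} [Fintype F] [DecidableEq F]

lemma surf_isop (φ : Equiv.Perm F) (hφ : ∀ e, φ (φ (φ e)) = e)
    (α : F → F) (hα : Function.Involutive α) (x y z : F → ℝ)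
    (hxα : ∀ e, x (α e) = x (φ e)) (hyα : ∀ e, y (α e) = y (φ e)) (hzα : ∀ e, z (α e) = z (φ e))
    (hz : ∀ e, z e ≠ z (φ e)) :
    36 * π * ((1/18) * ∑ e, (z e * cr (x (φ e)) (y (φ e)) (x (φ (φ e))) (y (φ (φ e)))
        + z (φ e) * cr (x (φ (φ e))) (y (φ (φ e))) (x e) (y e)
        + z (φ (φ e)) * cr (x e) (y e) (x (φ e)) (y (φ e)))) ^ 2
      ≤ ((1/6) * ∑ e, √(wv (z e) (x e) (z (φ e)) (x (φ e)) (z (φ (φ e))) (x (φ (φ e))) ^ 2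
        + wv (z e) (y e) (z (φ e)) (y (φ e)) (z (φ (φ e))) (y (φ (φ e))) ^ 2
        + nz (x e) (y e) (x (φ e)) (y (φ e)) (x (φ (φ e))) (y (φ (φ e))) ^ 2)) ^ 3 := by
  have hlev := level_isop φ hφ α hα x y z hxα hyα hzα hz
  have hz1 : ∀ e, z e ≠ z (φ e) := hz
  have hz2 : ∀ e, z (φ e) ≠ z (φ (φ e)) := fun e => hz (φ e)
  have hz3 : ∀ e, z (φ (φ e)) ≠ z e := fun e => by
    have := hz (φ (φ e)); rwa [hφ] at this
  have hx' : ∀ e, x (φ (α e)) = x e := fun e => by rw [← hxα, hα]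
  have hy' : ∀ e, y (φ (α e)) = y e := fun e => by rw [← hyα, hα]
  have hz' : ∀ e, z (φ (α e)) = z e := fun e => by rw [← hzα, hα]
  set n : F → ℝ := fun e => nz (x e) (y e) (x (φ e)) (y (φ e)) (x (φ (φ e))) (y (φ (φ e))) with hn
  set w : F → ℝ := fun e => wv (z e) (x e) (z (φ e)) (x (φ e)) (z (φ (φ e))) (x (φ (φ e))) ^ 2
        + wv (z e) (y e) (z (φ e)) (y (φ e)) (z (φ (φ e))) (y (φ (φ e))) ^ 2 with hw
  set d : ℕ → F → ℝ → ℝ := fun k e t => ddf k (z e) (z (φ e)) (z (φ (φ e))) t with hd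
  have hwn : ∀ e, 0 ≤ w e := fun e => by positivity
  have hdc : ∀ k e, Continuous (d (k+1) e) := fun k e => ddf_cont _ _ _ _
  have hdn : ∀ e t, 0 ≤ d 1 e t := fun e t => ddf_nonneg _ _ _ _ (hz1 e) (hz2 e) (hz3 e)
  set A : ℝ → ℝ := fun t => (1/6) * ∑ e, n e * d 2 e t with hA
  set A' : ℝ → ℝ := fun t => -(1/3) * ∑ e, n e * d 1 e t with hA'
  set L : ℝ → ℝ := fun t => (1/3) * ∑ e, d 1 e t * √(w e) with hL
  set S : ℝ → ℝ := fun t => (1/3) * ∑ e, d 1 e t * √(w e + n e ^ 2) with hS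
  have hAd : ∀ t, HasDerivAt A (A' t) t := by
    intro t
    have : HasDerivAt (fun t => ∑ e, n e * d 2 e t) (∑ e, n e * (-((0+2:ℕ):ℝ) * d 1 e t)) t :=
      HasDerivAt.fun_sum fun e _ => (ddf_deriv 0 _ _ _ t).const_mul _
    refine (this.const_mul (1/6)).congr_deriv ?_
    simp only [hA', Finset.mul_sum]
    refine Finset.sum_congr rfl fun e _ => ?_
    push_cast; ring
  have hAc : Continuous A := continuous_iff_continuousAt.2 fun t => (hAd t).continuousAt
  have hA'c : Continuous A' := by
    refine continuous_const.mul (continuous_finsetSum _ fun e _ => continuous_const.mul (hdc 0 e))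
  have hLc : Continuous L := by
    refine continuous_const.mul (continuous_finsetSum _ fun e _ => (hdc 0 e).mul continuous_const)
  have hSc : Continuous S := by
    refine continuous_const.mul (continuous_finsetSum _ fun e _ => (hdc 0 e).mul continuous_const)
  have hLn : ∀ t, 0 ≤ L t := fun t => by
    have : 0 ≤ ∑ e, d 1 e t * √(w e) := Finset.sum_nonneg fun e _ => mul_nonneg (hdn e t) (sqrt_nonneg _)
    simp only [hL]; positivity
  have hall : ∀ t, 4 * π * |A t| ≤ (L t) ^ 2 := by
    have hcl : IsClosed {t | 4 * π * |A t| ≤ (L t) ^ 2} :=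
      isClosed_le (continuous_const.mul hAc.abs) (hLc.pow 2)
    have hde : Dense ((Set.range z)ᶜ) := (Set.finite_range z).countable.dense_compl ℝ
    have hsub : (Set.range z)ᶜ ⊆ {t | 4 * π * |A t| ≤ (L t) ^ 2} := by
      intro t ht
      exact hlev t fun e he => ht ⟨e, he⟩
    intro t
    have : t ∈ closure ((Set.range z)ᶜ) := hde t
    exact (closure_minimal hsub hcl) this
  set M : ℝ := ∑ e, |z e| with hM
  have hMz : ∀ e, |z e| ≤ M := fun e => Finset.single_le_sum (f := fun e => |z e|) (fun _ _ => abs_nonneg _) (Finset.mem_univ e)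
  have hM0 : 0 ≤ M := Finset.sum_nonneg fun _ _ => abs_nonneg _
  have hn0 : ∑ e, n e = 0 := by
    have h1 := sum_cyc φ (fun e => cr (x e) (y e) (x (φ e)) (y (φ e)))
    have h2 := sum_anti α hα (fun e => cr (x e) (y e) (x (φ e)) (y (φ e))) (fun e => by
      simp only [hx', hy', hxα, hyα, cr]; ring)
    rw [h2, mul_zero] at h1
    rw [h1]
    simp only [hφ, hn, nz]
  have hAm : A (-M) = 0 := by
    simp only [hA]
    have : ∑ e, n e * d 2 e (-M) = ∑ e, n e := Finset.sum_congr rfl fun e _ => by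
      simp only [hd]
      rw [ddf_below2 _ _ _ _ (hz1 e) (hz2 e) (hz3 e) (abs_le.1 (hMz _)).1 (abs_le.1 (hMz _)).1 (abs_le.1 (hMz _)).1, mul_one]
    rw [this, hn0, mul_zero]
  have hAp : A M = 0 := by
    simp only [hA]
    rw [Finset.sum_eq_zero, mul_zero]
    intro e _
    simp only [hd]
    rw [ddf_above 2 (by norm_num) _ _ _ _ (abs_le.1 (hMz _)).2 (abs_le.1 (hMz _)).2 (abs_le.1 (hMz _)).2, mul_zero]
  have hkey : ∀ t c s, 0 ≤ c → c^2+s^2 ≤ 1 → c*√(4*π*|A t|) + s*A' t ≤ S t := by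
    intro t c s hc hcs
    have h1 : √(4*π*|A t|) ≤ L t := by
      rw [sqrt_le_left (hLn t)]; exact hall t
    have h2 : c*√(4*π*|A t|) ≤ c * L t := mul_le_mul_of_nonneg_left h1 hc
    refine le_trans (add_le_add_left h2 _) ?_
    have : c * L t + s * A' t = (1/3) * ∑ e, d 1 e t * (c * √(w e) - s * n e) := by
      simp only [hL, hA', Finset.mul_sum]
      rw [← Finset.sum_add_distrib]
      refine Finset.sum_congr rfl fun e _ => ?_
      ring
    rw [this]
    refine mul_le_mul_of_nonneg_left (Finset.sum_le_sum fun e _ => mul_le_mul_of_nonneg_left ?_ (hdn e t)) (by norm_num)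
    apply le_sqrt_of_sq_le
    have hq := sq_sqrt (hwn e)
    set q := √(w e)
    rw [← hq]
    nlinarith [sq_nonneg (c * n e + s * q), mul_nonneg (add_nonneg (sq_nonneg q) (sq_nonneg (n e))) (sub_nonneg.2 hcs)]
  have hfin := calib M hM0 A A' S hAd hA'c hSc hAm hAp hkey
  have hiS : ∫ t in (-M)..M, S t = (1/6) * ∑ e, √(w e + n e ^ 2) := by
    have hII1 : ∀ e, IntervalIntegrable (fun t => d 1 e t * √(w e + n e ^ 2)) volume (-M) M :=
      fun e => ((hdc 0 e).mul continuous_const).intervalIntegrable _ _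
    simp only [hS]
    rw [intervalIntegral.integral_const_mul, intervalIntegral.integral_finsetSum
      (fun e _ => hII1 e), Finset.mul_sum, Finset.mul_sum]
    refine Finset.sum_congr rfl fun e _ => ?_
    rw [intervalIntegral.integral_mul_const, show (∫ t in (-M)..M, d 1 e t) = 1/2 from
      ddf_int1 _ _ _ M (hz1 e) (hz2 e) (hz3 e) (hMz _) (hMz _) (hMz _)]
    ring
  have hiA : ∫ t in (-M)..M, A t = (1/18) * ∑ e, (z e * cr (x (φ e)) (y (φ e)) (x (φ (φ e))) (y (φ (φ e)))
        + z (φ e) * cr (x (φ (φ e))) (y (φ (φ e))) (x e) (y e)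
        + z (φ (φ e)) * cr (x e) (y e) (x (φ e)) (y (φ e))) := by
    have hII2 : ∀ e, IntervalIntegrable (fun t => n e * d 2 e t) volume (-M) M :=
      fun e => (continuous_const.mul (hdc 1 e)).intervalIntegrable _ _
    simp only [hA]
    rw [intervalIntegral.integral_const_mul, intervalIntegral.integral_finsetSum
      (fun e _ => hII2 e)]
    have h1 : ∑ e, (∫ t in (-M)..M, n e * d 2 e t) = ∑ e, (n e * ((z e + z (φ e) + z (φ (φ e)))/3)) + M * ∑ e, n e := by
      rw [Finset.mul_sum, ← Finset.sum_add_distrib]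
      refine Finset.sum_congr rfl fun e _ => ?_
      rw [intervalIntegral.integral_const_mul, show (∫ t in (-M)..M, d 2 e t) = _ from
        ddf_int2 _ _ _ M (hz1 e) (hz2 e) (hz3 e) (hMz _) (hMz _) (hMz _)]
      ring
    rw [h1, hn0, mul_zero, add_zero]
    have h2 := sum_cyc φ (fun e => (z e + z (φ e)) * cr (x e) (y e) (x (φ e)) (y (φ e)))
    have h3 := sum_anti α hα (fun e => (z e + z (φ e)) * cr (x e) (y e) (x (φ e)) (y (φ e))) (fun e => by
      simp only [hx', hy', hz', hxα, hyα, hzα, cr]; ring)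
    rw [h3, mul_zero] at h2
    have h4 : ∑ e, (n e * ((z e + z (φ e) + z (φ (φ e)))/3)) = (1/3) * (∑ e, (z e * cr (x (φ e)) (y (φ e)) (x (φ (φ e))) (y (φ (φ e)))
        + z (φ e) * cr (x (φ (φ e))) (y (φ (φ e))) (x e) (y e)
        + z (φ (φ e)) * cr (x e) (y e) (x (φ e)) (y (φ e))) +  ∑ e, ((z e + z (φ e)) * cr (x e) (y e) (x (φ e)) (y (φ e)) +
        (z (φ e) + z (φ (φ e))) * cr (x (φ e)) (y (φ e)) (x (φ (φ e))) (y (φ (φ e))) +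
        (z (φ (φ e)) + z (φ (φ (φ e)))) * cr (x (φ (φ e))) (y (φ (φ e))) (x (φ (φ (φ e)))) (y (φ (φ (φ e)))))) := by
      rw [← Finset.sum_add_distrib, Finset.mul_sum]
      refine Finset.sum_congr rfl fun e _ => ?_
      simp only [hφ, hn, nz]
      ring
    rw [h4, ← h2, add_zero]; ring
  rw [hiS, hiA] at hfin
  exact hfin

lemma surf_isop_gen {V : Type*} [Fintype V] [DecidableEq V]
    (φ : Equiv.Perm F) (hφ : ∀ e, φ (φ (φ e)) = e)
    (α : F → F) (hα : Function.Involutive α) (o : F → V) (ho : ∀ e, o (α e) = o (φ e))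
    (hne : ∀ e, o e ≠ o (φ e)) (x y z : V → ℝ) :
    36 * π * ((1/18) * ∑ e, (z (o e) * cr (x (o (φ e))) (y (o (φ e))) (x (o (φ (φ e)))) (y (o (φ (φ e))))
        + z (o (φ e)) * cr (x (o (φ (φ e)))) (y (o (φ (φ e)))) (x (o e)) (y (o e))
        + z (o (φ (φ e))) * cr (x (o e)) (y (o e)) (x (o (φ e))) (y (o (φ e))))) ^ 2
      ≤ ((1/6) * ∑ e, √(wv (z (o e)) (x (o e)) (z (o (φ e))) (x (o (φ e))) (z (o (φ (φ e)))) (x (o (φ (φ e)))) ^ 2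
        + wv (z (o e)) (y (o e)) (z (o (φ e))) (y (o (φ e))) (z (o (φ (φ e)))) (y (o (φ (φ e)))) ^ 2
        + nz (x (o e)) (y (o e)) (x (o (φ e))) (y (o (φ e))) (x (o (φ (φ e)))) (y (o (φ (φ e)))) ^ 2)) ^ 3 := by
  let g : V → ℝ := fun v => ((Fintype.equivFin V v : ℕ) : ℝ)
  have hg : Function.Injective g := by
    intro a b hab
    have : (Fintype.equivFin V a : ℕ) = (Fintype.equivFin V b : ℕ) := by
      have h2 : ((Fintype.equivFin V a : ℕ) : ℝ) = ((Fintype.equivFin V b : ℕ) : ℝ) := hab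
      exact_mod_cast h2
    exact (Fintype.equivFin V).injective (Fin.ext this)
  let zz : ℝ → V → ℝ := fun η v => z v + η * g v
  have hzz : ∀ v, Continuous fun η => zz η v := fun v => by fun_prop
  have hev : ∀ᶠ η in nhdsWithin (0:ℝ) {0}ᶜ, ∀ e, zz η (o e) ≠ zz η (o (φ e)) := by
    rw [eventually_all]
    intro e
    have hge : g (o (φ e)) - g (o e) ≠ 0 := sub_ne_zero.2 fun h => hne e (hg h).symm
    by_cases h : z (o e) = z (o (φ e))
    · filter_upwards [self_mem_nhdsWithin] with η hη h'
      simp only [zz] at h'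
      rw [h] at h'
      apply mul_ne_zero hη hge
      linarith
    · have hc : ContinuousAt (fun η => zz η (o e) - zz η (o (φ e))) 0 := ((hzz _).sub (hzz _)).continuousAt
      have h0 : (fun η => zz η (o e) - zz η (o (φ e))) 0 ≠ 0 := by
        simp only [zz]; simpa [sub_eq_zero] using h
      filter_upwards [nhdsWithin_le_nhds (hc.eventually_ne h0)] with η hη
      exact sub_ne_zero.1 hη
  have h1 : zz 0 = z := by funext v; simp [zz]
  have hlim : ∀ (f : ℝ → ℝ), Continuous f → Tendsto f (nhdsWithin (0:ℝ) {0}ᶜ) (nhds (f 0)) :=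
    fun f hf => hf.continuousAt.mono_left nhdsWithin_le_nhds
  have hL := hlim (fun η => 36 * π * ((1/18) * ∑ e, (zz η (o e) * cr (x (o (φ e))) (y (o (φ e))) (x (o (φ (φ e)))) (y (o (φ (φ e))))
        + zz η (o (φ e)) * cr (x (o (φ (φ e)))) (y (o (φ (φ e)))) (x (o e)) (y (o e))
        + zz η (o (φ (φ e))) * cr (x (o e)) (y (o e)) (x (o (φ e))) (y (o (φ e))))) ^ 2) (by fun_prop)
  have hR := hlim (fun η => ((1/6) * ∑ e, √(wv (zz η (o e)) (x (o e)) (zz η (o (φ e))) (x (o (φ e))) (zz η (o (φ (φ e)))) (x (o (φ (φ e)))) ^ 2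
        + wv (zz η (o e)) (y (o e)) (zz η (o (φ e))) (y (o (φ e))) (zz η (o (φ (φ e)))) (y (o (φ (φ e)))) ^ 2
        + nz (x (o e)) (y (o e)) (x (o (φ e))) (y (o (φ e))) (x (o (φ (φ e)))) (y (o (φ (φ e)))) ^ 2)) ^ 3) (by
          unfold wv; fun_prop)
  simp only [h1] at hL hR
  refine le_of_tendsto_of_tendsto hL hR ?_
  filter_upwards [hev] with η hη
  exact surf_isop φ hφ α hα (fun e => x (o e)) (fun e => y (o e)) (fun e => zz η (o e))
    (fun e => by rw [ho]) (fun e => by rw [ho]) (fun e => by rw [ho]) hη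

end surf

def sdet {V : Type*} (x y z : V → ℝ) (a b c : V) : ℝ :=
  z a * cr (x b) (y b) (x c) (y c) + z b * cr (x c) (y c) (x a) (y a) + z c * cr (x a) (y a) (x b) (y b)

def sq3 {V : Type*} (x y z : V → ℝ) (a b : V) : ℝ :=
  (x b - x a) ^ 2 + (y b - y a) ^ 2 + (z b - z a) ^ 2

noncomputable def sarea {V : Type*} (x y z : V → ℝ) (a b c : V) : ℝ :=
  √(wv (z a) (x a) (z b) (x b) (z c) (x c) ^ 2 + wv (z a) (y a) (z b) (y b) (z c) (y c) ^ 2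
    + nz (x a) (y a) (x b) (y b) (x c) (y c) ^ 2)

lemma sdet_cyc {V : Type*} (x y z : V → ℝ) (a b c : V) : sdet x y z b c a = sdet x y z a b c := by
  unfold sdet; ring

lemma sarea_cyc {V : Type*} (x y z : V → ℝ) (a b c : V) : sarea x y z b c a = sarea x y z a b c := by
  unfold sarea; rw [wv_cyc (z a) (x a), wv_cyc (z a) (y a), nz_cyc]

lemma sarea_le {V : Type*} (x y z : V → ℝ) (a b c : V) :
    sarea x y z a b c ≤ (1/2) * (sq3 x y z a b + sq3 x y z b c) := by
  unfold sarea
  apply sqrt_le_iff.2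
  constructor
  · unfold sq3; positivity
  · unfold sq3 wv nz cr
    nlinarith [sq_nonneg ((x b - x a) * (x c - x b) + (y b - y a) * (y c - y b) + (z b - z a) * (z c - z b)),
      sq_nonneg (((x b - x a) ^ 2 + (y b - y a) ^ 2 + (z b - z a) ^ 2) - ((x c - x b) ^ 2 + (y c - y b) ^ 2 + (z c - z b) ^ 2))]

section torus
variable {N : ℕ}

def tO : (ZMod N × ZMod N) × Bool × Fin 3 → ZMod N × ZMod N
  | (g, false, 0) => g
  | (g, false, 1) => g + (1, 0)
  | (g, false, 2) => g + (1, 1)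
  | (g, true, 0) => g
  | (g, true, 1) => g + (1, 1)
  | (g, true, 2) => g + (0, 1)

def tA : (ZMod N × ZMod N) × Bool × Fin 3 → (ZMod N × ZMod N) × Bool × Fin 3
  | (g, false, 0) => (g - (0, 1), true, 1)
  | (g, false, 1) => (g + (1, 0), true, 2)
  | (g, false, 2) => (g, true, 0)
  | (g, true, 0) => (g, false, 2)
  | (g, true, 1) => (g + (0, 1), false, 0)
  | (g, true, 2) => (g - (1, 0), false, 1)

def tP : Equiv.Perm ((ZMod N × ZMod N) × Bool × Fin 3) :=
  Equiv.prodCongr (Equiv.refl _) (Equiv.prodCongr (Equiv.refl _) (Equiv.addRight 1))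

lemma tP_apply (g : ZMod N × ZMod N) (b : Bool) (k : Fin 3) : tP (g, b, k) = (g, b, k + 1) := rfl

lemma torus_isop [NeZero N] (hN : 1 < N) (x y z : ZMod N × ZMod N → ℝ) :
    36 * π * ((1/6) * ∑ g, (sdet x y z g (g + (1, 0)) (g + (1, 1)) + sdet x y z g (g + (1, 1)) (g + (0, 1)))) ^ 2
    ≤ ((1/4) * ∑ g, (sq3 x y z g (g + (1, 0)) + sq3 x y z (g + (1, 0)) (g + (1, 1))
        + (sq3 x y z (g + (1, 1)) (g + (0, 1)) + sq3 x y z (g + (0, 1)) g))) ^ 3 := by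
  have : Fact (1 < N) := ⟨hN⟩
  have h10 : (1 : ZMod N) ≠ 0 := one_ne_zero
  have key := surf_isop_gen (F := (ZMod N × ZMod N) × Bool × Fin 3) tP
    (by rintro ⟨g, b, k⟩; simp only [tP_apply]; fin_cases k <;> rfl)
    tA (by
      rintro ⟨g, b, k⟩
      cases b <;> fin_cases k <;> simp [tA])
    tO (by
      rintro ⟨g, b, k⟩
      cases b <;> fin_cases k <;> simp [tA, tO, tP_apply, Prod.ext_iff])
    (by
      rintro ⟨g, b, k⟩
      cases b <;> fin_cases k <;> simp [tO, tP_apply, Prod.ext_iff])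
    x y z
  change 36 * π * ((1/18) * ∑ e, sdet x y z (tO e) (tO (tP e)) (tO (tP (tP e)))) ^ 2
    ≤ ((1/6) * ∑ e, sarea x y z (tO e) (tO (tP e)) (tO (tP (tP e)))) ^ 3 at key
  have f1 : ∑ e, sdet x y z (tO e) (tO (tP e)) (tO (tP (tP e))) =
      3 * ∑ g, (sdet x y z g (g + (1, 0)) (g + (1, 1)) + sdet x y z g (g + (1, 1)) (g + (0, 1))) := by
    rw [Fintype.sum_prod_type, Finset.mul_sum]
    refine Finset.sum_congr rfl fun g _ => ?_
    rw [Fintype.sum_prod_type, Fintype.sum_bool, Fin.sum_univ_three, Fin.sum_univ_three]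
    change (sdet x y z g (g + (1, 1)) (g + (0, 1)) + sdet x y z (g + (1, 1)) (g + (0, 1)) g
      + sdet x y z (g + (0, 1)) g (g + (1, 1))) + (sdet x y z g (g + (1, 0)) (g + (1, 1))
      + sdet x y z (g + (1, 0)) (g + (1, 1)) g + sdet x y z (g + (1, 1)) g (g + (1, 0))) = _
    unfold sdet; ring
  have f2 : ∑ e, sarea x y z (tO e) (tO (tP e)) (tO (tP (tP e))) ≤
      3 * ∑ g, ((1/2) * (sq3 x y z g (g + (1, 0)) + sq3 x y z (g + (1, 0)) (g + (1, 1)))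
        + (1/2) * (sq3 x y z (g + (1, 1)) (g + (0, 1)) + sq3 x y z (g + (0, 1)) g)) := by
    rw [Fintype.sum_prod_type, Finset.mul_sum]
    refine Finset.sum_le_sum fun g _ => ?_
    rw [Fintype.sum_prod_type, Fintype.sum_bool, Fin.sum_univ_three, Fin.sum_univ_three]
    change (sarea x y z g (g + (1, 1)) (g + (0, 1)) + sarea x y z (g + (1, 1)) (g + (0, 1)) g
      + sarea x y z (g + (0, 1)) g (g + (1, 1))) + (sarea x y z g (g + (1, 0)) (g + (1, 1))
      + sarea x y z (g + (1, 0)) (g + (1, 1)) g + sarea x y z (g + (1, 1)) g (g + (1, 0))) ≤ _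
    have a1 := sarea_le x y z g (g + (1, 0)) (g + (1, 1))
    have a2 := sarea_le x y z (g + (1, 1)) (g + (0, 1)) g
    have b1 := sarea_cyc x y z g (g + (1, 0)) (g + (1, 1))
    have b2 := sarea_cyc x y z (g + (1, 0)) (g + (1, 1)) g
    have b3 := sarea_cyc x y z (g + (1, 1)) (g + (0, 1)) g
    have b4 := sarea_cyc x y z (g + (0, 1)) g (g + (1, 1))
    linarith
  rw [f1] at key
  refine le_trans (le_of_eq (by ring)) (key.trans ?_)
  have f0 : 0 ≤ ∑ e, sarea x y z (tO e) (tO (tP e)) (tO (tP (tP e))) :=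
    Finset.sum_nonneg fun e _ => sqrt_nonneg _
  refine pow_le_pow_left₀ (by positivity) ?_ 3
  refine (mul_le_mul_of_nonneg_left f2 (by norm_num)).trans (le_of_eq ?_)
  simp only [← mul_add, ← Finset.mul_sum]
  ring

lemma zval_succ [NeZero N] (hN : 1 < N) (f : ℕ → ℝ) (hf : f N = f 0) (i : ZMod N) :
    f (i + 1).val = f (i.val + 1) := by
  have : Fact (1 < N) := ⟨hN⟩
  rw [ZMod.val_add, ZMod.val_one]
  have hi := ZMod.val_lt i
  rcases Nat.lt_or_ge (i.val + 1) N with h | h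
  · rw [Nat.mod_eq_of_lt h]
  · have : i.val + 1 = N := by omega
    rw [this, Nat.mod_self, hf]

lemma zsum (n : ℕ) (f : ℕ → ℝ) : ∑ i : ZMod (n + 2), f i.val = ∑ i ∈ Finset.range (n + 2), f i :=
  Fin.sum_univ_eq_sum_range f (n + 2)

lemma torus_grid (n : ℕ) (x y z : ℕ × ℕ → ℝ)
    (hx : ∀ j, x (n + 2, j) = x (0, j)) (hx' : ∀ i, x (i, n + 2) = x (i, 0))
    (hy : ∀ j, y (n + 2, j) = y (0, j)) (hy' : ∀ i, y (i, n + 2) = y (i, 0))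
    (hz : ∀ j, z (n + 2, j) = z (0, j)) (hz' : ∀ i, z (i, n + 2) = z (i, 0)) :
    36 * π * ((1/6) * ∑ i ∈ Finset.range (n + 2), ∑ j ∈ Finset.range (n + 2),
      (sdet x y z (i, j) (i + 1, j) (i + 1, j + 1) + sdet x y z (i, j) (i + 1, j + 1) (i, j + 1))) ^ 2
    ≤ ((1/4) * ∑ i ∈ Finset.range (n + 2), ∑ j ∈ Finset.range (n + 2),
      (sq3 x y z (i, j) (i + 1, j) + sq3 x y z (i + 1, j) (i + 1, j + 1)
        + (sq3 x y z (i + 1, j + 1) (i, j + 1) + sq3 x y z (i, j + 1) (i, j)))) ^ 3 := by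
  have key := torus_isop (N := n + 2) (by omega) (fun g => x (g.1.val, g.2.val))
    (fun g => y (g.1.val, g.2.val)) (fun g => z (g.1.val, g.2.val))
  have a1 : ∀ (x : ℕ × ℕ → ℝ), (∀ j, x (n + 2, j) = x (0, j)) → ∀ (i : ZMod (n+2)) j, x ((i + 1).val, j) = x (i.val + 1, j) :=
    fun x hx i j => zval_succ (N := n + 2) (by omega) (fun i => x (i, j)) (hx j) i
  have a2 : ∀ (x : ℕ × ℕ → ℝ), (∀ i, x (i, n + 2) = x (i, 0)) → ∀ i (j : ZMod (n+2)), x (i, (j + 1).val) = x (i, j.val + 1) :=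
    fun x hx i j => zval_succ (N := n + 2) (by omega) (fun j => x (i, j)) (hx i) j
  simp only [sdet, sq3, Fintype.sum_prod_type, Prod.mk_add_mk, add_zero, a1 x hx, a1 y hy, a1 z hz,
    a2 x hx', a2 y hy', a2 z hz'] at key
  simp only [sdet, sq3]
  rw [← zsum, ← zsum]
  simp only [← zsum n (fun j => _)]
  exact key

end torus

lemma riem1 (g : ℝ → ℝ) (hg : Continuous g) (a h ε : ℝ) (hh : 0 ≤ h) (N : ℕ) (c : ℕ → ℝ)
    (hc : ∀ i < N, ∀ t ∈ Set.Icc (a + i * h) (a + (i + 1) * h), |g t - c i| ≤ ε) :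
    |(∫ t in a..(a + N * h), g t) - ∑ i ∈ Finset.range N, h * c i| ≤ N * h * ε := by
  have h1 := intervalIntegral.sum_integral_adjacent_intervals (μ := volume) (f := g)
    (a := fun i : ℕ => a + i * h) (n := N) (fun k _ => hg.intervalIntegrable _ _)
  simp only [Nat.cast_zero, zero_mul, add_zero] at h1
  rw [← h1, ← Finset.sum_sub_distrib]
  refine (Finset.abs_sum_le_sum_abs _ _).trans ?_
  have : (N * h * ε : ℝ) = ∑ i ∈ Finset.range N, h * ε := by simp; ring
  rw [this]
  refine Finset.sum_le_sum fun i hi => ?_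
  have hi' := Finset.mem_range.1 hi
  have e1 : h * c i = ∫ t in (a + i * h)..(a + (i + 1 : ℕ) * h), c i := by
    rw [intervalIntegral.integral_const, smul_eq_mul]; push_cast; ring
  rw [e1, ← intervalIntegral.integral_sub (hg.intervalIntegrable _ _) (continuous_const.intervalIntegrable _ _)]
  have := intervalIntegral.norm_integral_le_of_norm_le_const (f := fun t => g t - c i) (C := ε)
    (a := a + i * h) (b := a + (i + 1 : ℕ) * h) (fun t ht => by
      have hle : a + i * h ≤ a + (i + 1 : ℕ) * h := by push_cast; nlinarith
      rw [Set.uIoc_of_le hle] at ht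
      refine hc i hi' t ⟨ht.1.le, ?_⟩
      have := ht.2; push_cast at this; exact this)
  refine this.trans (le_of_eq ?_)
  push_cast
  rw [show a + (i + 1) * h - (a + i * h) = h by ring, abs_of_nonneg hh]; ring

lemma riem2 (G : ℝ × ℝ → ℝ) (hG : Continuous G) (a h ε : ℝ) (hh : 0 ≤ h) (N : ℕ) (c : ℕ → ℕ → ℝ)
    (hc : ∀ i < N, ∀ j < N, ∀ s ∈ Set.Icc (a + i * h) (a + (i + 1) * h),
      ∀ t ∈ Set.Icc (a + j * h) (a + (j + 1) * h), |G (s, t) - c i j| ≤ ε) :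
    |(∫ s in a..(a + N * h), ∫ t in a..(a + N * h), G (s, t)) -
      ∑ i ∈ Finset.range N, ∑ j ∈ Finset.range N, h ^ 2 * c i j| ≤ (N * h) ^ 2 * ε := by
  have := riem1 (fun s => ∫ t in a..(a + N * h), G (s, t))
    (intervalIntegral.continuous_parametric_intervalIntegral_of_continuous' (f := fun s t => G (s, t)) hG _ _)
    a h (N * h * ε) hh N (fun i => ∑ j ∈ Finset.range N, h * c i j) (fun i hi s hs =>
      riem1 (fun t => G (s, t)) (by fun_prop) a h ε hh N (c i) (fun j hj t ht => hc i hi j hj s hs t ht))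
  simp only [Finset.mul_sum] at this
  calc _ = _ := by
        congr 2
        refine Finset.sum_congr rfl fun i _ => Finset.sum_congr rfl fun j _ => ?_
        rw [pow_two, mul_assoc]
    _ ≤ _ := this
    _ = _ := by ring

/-- index filter: grid size, cell, point in the cell, on the square `[-K,K]^2`. -/
def gfil (K : ℝ) : Filter (ℕ × (ℕ × ℕ) × (ℝ × ℝ)) :=
  comap Prod.fst atTop ⊓ 𝓟 {q | q.2.1.1 < q.1 + 2 ∧ q.2.1.2 < q.1 + 2 ∧
    q.2.2.1 ∈ Set.Icc (-K + q.2.1.1 * (2 * K / (q.1 + 2))) (-K + (q.2.1.1 + 1) * (2 * K / (q.1 + 2))) ∧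
    q.2.2.2 ∈ Set.Icc (-K + q.2.1.2 * (2 * K / (q.1 + 2))) (-K + (q.2.1.2 + 1) * (2 * K / (q.1 + 2)))}

/-- uniform closeness of grid data to a bounded function. -/
def UC (K : ℝ) (c : ℕ → ℕ → ℕ → ℝ) (G : ℝ × ℝ → ℝ) : Prop :=
  Tendsto (fun q : ℕ × (ℕ × ℕ) × (ℝ × ℝ) => c q.1 q.2.1.1 q.2.1.2 - G q.2.2) (gfil K) (nhds 0) ∧
    ∃ B, ∀ p, |G p| ≤ B

lemma UC.add {K : ℝ} {c c' G G'} (h : UC K c G) (h' : UC K c' G') :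
    UC K (fun n i j => c n i j + c' n i j) (fun p => G p + G' p) := by
  obtain ⟨h1, B, hB⟩ := h
  obtain ⟨h1', B', hB'⟩ := h'
  refine ⟨?_, B + B', fun p => (abs_add_le _ _).trans (add_le_add (hB p) (hB' p))⟩
  have := h1.add h1'
  rw [add_zero] at this
  refine this.congr fun q => by ring

lemma UC.neg {K : ℝ} {c G} (h : UC K c G) :
    UC K (fun n i j => - c n i j) (fun p => - G p) := by
  obtain ⟨h1, B, hB⟩ := h
  refine ⟨?_, B, fun p => by rw [abs_neg]; exact hB p⟩
  have := h1.neg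
  rw [neg_zero] at this
  refine this.congr fun q => by ring

lemma UC.sub {K : ℝ} {c c' G G'} (h : UC K c G) (h' : UC K c' G') :
    UC K (fun n i j => c n i j - c' n i j) (fun p => G p - G' p) := by
  simpa only [sub_eq_add_neg] using h.add h'.neg

lemma UC.mul {K : ℝ} {c c' G G'} (h : UC K c G) (h' : UC K c' G') :
    UC K (fun n i j => c n i j * c' n i j) (fun p => G p * G' p) := by
  obtain ⟨h1, B, hB⟩ := h
  obtain ⟨h1', B', hB'⟩ := h'
  refine ⟨?_, B * B', fun p => by
    rw [abs_mul]; exact mul_le_mul (hB p) (hB' p) (abs_nonneg _) ((abs_nonneg _).trans (hB p))⟩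
  have e1 : Tendsto (fun q : ℕ × (ℕ × ℕ) × (ℝ × ℝ) => G q.2.2 * (c' q.1 q.2.1.1 q.2.1.2 - G' q.2.2)) (gfil K) (nhds 0) :=
    bdd_le_mul_tendsto_zero' B (Eventually.of_forall fun q => hB _) h1'
  have e2 : Tendsto (fun q : ℕ × (ℕ × ℕ) × (ℝ × ℝ) => G' q.2.2 * (c q.1 q.2.1.1 q.2.1.2 - G q.2.2)) (gfil K) (nhds 0) :=
    bdd_le_mul_tendsto_zero' B' (Eventually.of_forall fun q => hB' _) h1
  have := ((h1.mul h1').add e1).add e2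
  simp only [add_zero, mul_zero] at this
  refine this.congr fun q => by ring

lemma gfil_ev (K : ℝ) (P : ℕ × (ℕ × ℕ) × (ℝ × ℝ) → Prop) :
    (∀ᶠ q in gfil K, P q) ↔ ∀ᶠ n : ℕ in atTop, ∀ i < n + 2, ∀ j < n + 2,
      ∀ s ∈ Set.Icc (-K + i * (2 * K / (n + 2))) (-K + (i + 1) * (2 * K / (n + 2))),
      ∀ t ∈ Set.Icc (-K + j * (2 * K / (n + 2))) (-K + (j + 1) * (2 * K / (n + 2))), P (n, (i, j), (s, t)) := by
  unfold gfil
  rw [eventually_inf_principal, eventually_comap]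
  refine eventually_congr (Eventually.of_forall fun n => ?_)
  constructor
  · intro h i hi j hj s hs t ht
    exact h (n, (i, j), (s, t)) rfl ⟨hi, hj, hs, ht⟩
  · rintro h ⟨m, ⟨i, j⟩, ⟨s, t⟩⟩ rfl ⟨hi, hj, hs, ht⟩
    exact h i hi j hj s hs t ht

lemma UC.riemann {K : ℝ} (hK : 0 < K) {c G} (h : UC K c G) (hG : Continuous G) :
    Tendsto (fun n : ℕ => ∑ i ∈ Finset.range (n + 2), ∑ j ∈ Finset.range (n + 2), (2 * K / (n + 2)) ^ 2 * c n i j)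
      atTop (nhds (∫ s in (-K)..K, ∫ t in (-K)..K, G (s, t))) := by
  rw [Metric.tendsto_nhds]
  intro ε hε
  have h1 := (Metric.tendsto_nhds.1 h.1) (ε / ((2 * K) ^ 2 + 1)) (by positivity)
  rw [gfil_ev] at h1
  filter_upwards [h1] with n hn
  have hN : (n + 2 : ℝ) ≠ 0 := by positivity
  have e : -K + ((n + 2 : ℕ) : ℝ) * (2 * K / (n + 2)) = K := by push_cast; field_simp; ring
  have e' : ((n + 2 : ℕ) : ℝ) * (2 * K / (n + 2)) = 2 * K := by push_cast; field_simp
  have := riem2 G hG (-K) (2 * K / (n + 2)) (ε / ((2 * K) ^ 2 + 1)) (by positivity) (n + 2) (c n)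
    (fun i hi j hj s hs t ht => by
      have := hn i hi j hj s hs t ht
      simp only [dist_zero_right, Real.norm_eq_abs] at this
      rw [abs_sub_comm]; exact this.le)
  rw [e, e'] at this
  rw [dist_comm, Real.dist_eq]
  refine this.trans_lt ?_
  rw [mul_div_assoc', div_lt_iff₀ (by positivity)]
  nlinarith

/-- base case: values at points close to p -/
lemma UC.base {K : ℝ} {G : ℝ × ℝ → ℝ} (hG : UniformContinuous G) (hB : ∃ B, ∀ p, |G p| ≤ B)
    {c : ℕ → ℕ → ℕ → ℝ}
    (hc : ∀ n i j : ℕ, ∃ ξ ∈ Set.Icc (0:ℝ) 2, ∃ η ∈ Set.Icc (0:ℝ) 2,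
      c n i j = G (-K + (i + ξ) * (2 * K / (n + 2)), -K + (j + η) * (2 * K / (n + 2)))) (hK : 0 < K) :
    UC K c G := by
  refine ⟨?_, hB⟩
  rw [Metric.tendsto_nhds]
  intro ε hε
  obtain ⟨d, hd, hd'⟩ := Metric.uniformContinuous_iff.1 hG ε hε
  rw [gfil_ev]
  have hlim : Tendsto (fun n : ℕ => 4 * K * (1 / ((n:ℝ) + 2))) atTop (nhds (4 * K * 0)) := by
    refine Tendsto.const_mul _ ?_
    have := (tendsto_one_div_add_atTop_nhds_zero_nat (𝕜 := ℝ)).comp (tendsto_add_atTop_nat 1)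
    refine this.congr fun n => ?_
    simp only [Function.comp]; push_cast; ring_nf
  rw [mul_zero] at hlim
  filter_upwards [hlim.eventually_lt_const hd] with n hn i hi j hj s hs t ht
  obtain ⟨ξ, hξ, η, hη, e⟩ := hc n i j
  simp only [e, dist_zero_right]
  rw [← dist_eq_norm]
  apply hd'
  have hh : 0 < 2 * K / ((n:ℝ) + 2) := by positivity
  have hh2 : 2 * (2 * K / ((n:ℝ) + 2)) < d := by
    refine lt_of_eq_of_lt ?_ hn; ring
  set h := 2 * K / ((n:ℝ) + 2)
  rw [Prod.dist_eq, max_lt_iff, Real.dist_eq, Real.dist_eq, abs_lt, abs_lt]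
  have b1 := mul_nonneg hξ.1 hh.le
  have b2 := mul_nonneg hη.1 hh.le
  have b3 := mul_le_mul_of_nonneg_right hξ.2 hh.le
  have b4 := mul_le_mul_of_nonneg_right hη.2 hh.le
  obtain ⟨s1, s2⟩ := hs
  obtain ⟨t1, t2⟩ := ht
  refine ⟨⟨?_, ?_⟩, ?_, ?_⟩ <;> simp only <;> nlinarith

lemma mvx (f : ℝ × ℝ → ℝ) (hf : Differentiable ℝ f) (a h b : ℝ) (hh : 0 < h) :
    ∃ ξ ∈ Set.Ioo (0:ℝ) 1, (f (a + h, b) - f (a, b)) / h = fderiv ℝ f (a + ξ * h, b) (1, 0) := by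
  have hd : ∀ ξ : ℝ, HasDerivAt (fun ξ => f (a + ξ * h, b)) (fderiv ℝ f (a + ξ * h, b) (h, 0)) ξ := by
    intro ξ
    have h1 : HasDerivAt (fun ξ : ℝ => (a + ξ * h, b)) (h, 0) ξ := by
      refine HasDerivAt.prodMk ?_ (hasDerivAt_const _ _)
      simpa using ((hasDerivAt_id ξ).mul_const h).const_add a
    exact (hf (a + ξ * h, b)).hasFDerivAt.comp_hasDerivAt ξ h1
  obtain ⟨ξ, hξ, e⟩ := exists_hasDerivAt_eq_slope _ _ zero_lt_one
    (fun ξ _ => (hd ξ).continuousAt.continuousWithinAt) (fun ξ _ => hd ξ)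
  refine ⟨ξ, hξ, ?_⟩
  have e2 : ((h, 0) : ℝ × ℝ) = h • ((1, 0) : ℝ × ℝ) := by simp
  rw [e2, map_smul, smul_eq_mul] at e
  simp only [one_mul, zero_mul, add_zero, sub_zero, div_one] at e
  rw [← e, mul_div_cancel_left₀ _ hh.ne']

lemma mvy (f : ℝ × ℝ → ℝ) (hf : Differentiable ℝ f) (a h b : ℝ) (hh : 0 < h) :
    ∃ ξ ∈ Set.Ioo (0:ℝ) 1, (f (b, a + h) - f (b, a)) / h = fderiv ℝ f (b, a + ξ * h) (0, 1) := by
  have hd : ∀ ξ : ℝ, HasDerivAt (fun ξ => f (b, a + ξ * h)) (fderiv ℝ f (b, a + ξ * h) (0, h)) ξ := by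
    intro ξ
    have h1 : HasDerivAt (fun ξ : ℝ => (b, a + ξ * h)) (0, h) ξ := by
      refine HasDerivAt.prodMk (hasDerivAt_const _ _) ?_
      simpa using ((hasDerivAt_id ξ).mul_const h).const_add a
    exact (hf (b, a + ξ * h)).hasFDerivAt.comp_hasDerivAt ξ h1
  obtain ⟨ξ, hξ, e⟩ := exists_hasDerivAt_eq_slope _ _ zero_lt_one
    (fun ξ _ => (hd ξ).continuousAt.continuousWithinAt) (fun ξ _ => hd ξ)
  refine ⟨ξ, hξ, ?_⟩
  have e2 : ((0, h) : ℝ × ℝ) = h • ((0, 1) : ℝ × ℝ) := by simp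
  rw [e2, map_smul, smul_eq_mul] at e
  simp only [one_mul, zero_mul, add_zero, sub_zero, div_one] at e
  rw [← e, mul_div_cancel_left₀ _ hh.ne']

def tri3 (X Y Z : Fin 3 → ℝ) : ℝ :=
  X 0 * (Y 1 * Z 2 - Y 2 * Z 1) + X 1 * (Y 2 * Z 0 - Y 0 * Z 2) + X 2 * (Y 0 * Z 1 - Y 1 * Z 0)

def sqs (X : Fin 3 → ℝ) : ℝ := X 0 * X 0 + X 1 * X 1 + X 2 * X 2

lemma UC.tri3 {K : ℝ} {a b c : Fin 3 → ℕ → ℕ → ℕ → ℝ} {A B C : Fin 3 → ℝ × ℝ → ℝ}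
    (ha : ∀ k, UC K (a k) (A k)) (hb : ∀ k, UC K (b k) (B k)) (hc : ∀ k, UC K (c k) (C k)) :
    UC K (fun n i j => tri3 (fun k => a k n i j) (fun k => b k n i j) (fun k => c k n i j))
      (fun p => tri3 (fun k => A k p) (fun k => B k p) (fun k => C k p)) :=
  (((ha 0).mul (((hb 1).mul (hc 2)).sub ((hb 2).mul (hc 1)))).add
    ((ha 1).mul (((hb 2).mul (hc 0)).sub ((hb 0).mul (hc 2))))).add
    ((ha 2).mul (((hb 0).mul (hc 1)).sub ((hb 1).mul (hc 0))))

lemma UC.sqs {K : ℝ} {a : Fin 3 → ℕ → ℕ → ℕ → ℝ} {A : Fin 3 → ℝ × ℝ → ℝ}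
    (ha : ∀ k, UC K (a k) (A k)) :
    UC K (fun n i j => sqs (fun k => a k n i j)) (fun p => sqs (fun k => A k p)) :=
  (((ha 0).mul (ha 0)).add ((ha 1).mul (ha 1))).add ((ha 2).mul (ha 2))

lemma iso_int (f : Fin 3 → ℝ × ℝ → ℝ) (hf : ∀ k, ContDiff ℝ (⊤ : ℕ∞) (f k))
    (hs : ∀ k, HasCompactSupport (f k)) (K : ℝ) (hK : 0 < K)
    (h0 : ∀ k p, K ≤ |p.1| ∨ K ≤ |p.2| → f k p = 0) :
    36 * π * ((1/6) * ∫ s in (-K)..K, ∫ t in (-K)..K,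
      (tri3 (fun k => f k (s, t)) (fun k => fderiv ℝ (f k) (s, t) (1, 0)) (fun k => fderiv ℝ (f k) (s, t) (0, 1))
       + tri3 (fun k => f k (s, t)) (fun k => fderiv ℝ (f k) (s, t) (1, 0)) (fun k => fderiv ℝ (f k) (s, t) (0, 1)))) ^ 2
    ≤ ((1/4) * ∫ s in (-K)..K, ∫ t in (-K)..K,
      (sqs (fun k => fderiv ℝ (f k) (s, t) (1, 0)) + sqs (fun k => fderiv ℝ (f k) (s, t) (0, 1))
       + (sqs (fun k => fderiv ℝ (f k) (s, t) (1, 0)) + sqs (fun k => fderiv ℝ (f k) (s, t) (0, 1))))) ^ 3 := by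
  have hdf : ∀ k, Differentiable ℝ (f k) := fun k => (hf k).differentiable (by simp)
  have hfc : ∀ k, Continuous (f k) := fun k => (hf k).continuous
  have hDc : ∀ k, Continuous (fderiv ℝ (f k)) := fun k => (hf k).continuous_fderiv (by simp)
  set fx : Fin 3 → ℝ × ℝ → ℝ := fun k p => fderiv ℝ (f k) p (1, 0) with hfx
  set fy : Fin 3 → ℝ × ℝ → ℝ := fun k p => fderiv ℝ (f k) p (0, 1) with hfy
  have hxc : ∀ k, Continuous (fx k) := fun k => (hDc k).clm_apply continuous_const
  have hyc : ∀ k, Continuous (fy k) := fun k => (hDc k).clm_apply continuous_const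
  have hxs : ∀ k, HasCompactSupport (fx k) := fun k => (hs k).fderiv_apply ℝ (1, 0)
  have hys : ∀ k, HasCompactSupport (fy k) := fun k => (hs k).fderiv_apply ℝ (0, 1)
  have hbd : ∀ g : ℝ × ℝ → ℝ, Continuous g → HasCompactSupport g → ∃ B, ∀ p, |g p| ≤ B := fun g hg hgs =>
    hgs.exists_bound_of_continuous hg
  have hhp : ∀ n : ℕ, 0 < 2 * K / ((n:ℝ) + 2) := fun n => by positivity
  set v : Fin 3 → ℕ → ℕ → ℕ → ℝ := fun k n i j =>
    f k (-K + i * (2 * K / (n + 2)), -K + j * (2 * K / (n + 2))) with hv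
  have cast1 : ∀ (n i : ℕ), -K + ((i + 1 : ℕ) : ℝ) * (2 * K / (n + 2)) = (-K + i * (2 * K / (n + 2))) + 2 * K / (n + 2) := by
    intro n i; push_cast; ring
  have U0 : ∀ k, UC K (v k) (f k) := fun k =>
    UC.base ((hs k).uniformContinuous_of_continuous (hfc k)) (hbd _ (hfc k) (hs k))
      (fun n i j => ⟨0, by norm_num, 0, by norm_num, by simp only [add_zero, hv]⟩) hK
  have Ua : ∀ k, UC K (fun n i j => (v k n (i + 1) j - v k n i j) / (2 * K / (n + 2))) (fx k) := fun k =>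
    UC.base ((hxs k).uniformContinuous_of_continuous (hxc k)) (hbd _ (hxc k) (hxs k))
      (fun n i j => by
        obtain ⟨ξ, hξ, e⟩ := mvx (f k) (hdf k) (-K + i * (2 * K / (n + 2))) (2 * K / (n + 2)) (-K + j * (2 * K / (n + 2))) (hhp n)
        refine ⟨ξ, ⟨hξ.1.le, by linarith [hξ.2]⟩, 0, by norm_num, ?_⟩
        simp only [hv]
        rw [cast1, e]
        simp only [hfx]
        congr 3 <;> ring) hK
  have Ua' : ∀ k, UC K (fun n i j => (v k n (i + 1) (j + 1) - v k n i (j + 1)) / (2 * K / (n + 2))) (fx k) := fun k =>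
    UC.base ((hxs k).uniformContinuous_of_continuous (hxc k)) (hbd _ (hxc k) (hxs k))
      (fun n i j => by
        obtain ⟨ξ, hξ, e⟩ := mvx (f k) (hdf k) (-K + i * (2 * K / (n + 2))) (2 * K / (n + 2)) (-K + (j + 1 : ℕ) * (2 * K / (n + 2))) (hhp n)
        refine ⟨ξ, ⟨hξ.1.le, by linarith [hξ.2]⟩, 1, by norm_num, ?_⟩
        simp only [hv]
        rw [cast1 n i, e]
        simp only [hfx]
        push_cast
        congr 3; ring) hK
  have Ub : ∀ k, UC K (fun n i j => (v k n i (j + 1) - v k n i j) / (2 * K / (n + 2))) (fy k) := fun k =>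
    UC.base ((hys k).uniformContinuous_of_continuous (hyc k)) (hbd _ (hyc k) (hys k))
      (fun n i j => by
        obtain ⟨ξ, hξ, e⟩ := mvy (f k) (hdf k) (-K + j * (2 * K / (n + 2))) (2 * K / (n + 2)) (-K + i * (2 * K / (n + 2))) (hhp n)
        refine ⟨0, by norm_num, ξ, ⟨hξ.1.le, by linarith [hξ.2]⟩, ?_⟩
        simp only [hv]
        rw [cast1, e]
        simp only [hfy]
        congr 3 <;> ring) hK
  have Ub' : ∀ k, UC K (fun n i j => (v k n (i + 1) (j + 1) - v k n (i + 1) j) / (2 * K / (n + 2))) (fy k) := fun k =>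
    UC.base ((hys k).uniformContinuous_of_continuous (hyc k)) (hbd _ (hyc k) (hys k))
      (fun n i j => by
        obtain ⟨ξ, hξ, e⟩ := mvy (f k) (hdf k) (-K + j * (2 * K / (n + 2))) (2 * K / (n + 2)) (-K + (i + 1 : ℕ) * (2 * K / (n + 2))) (hhp n)
        refine ⟨1, by norm_num, ξ, ⟨hξ.1.le, by linarith [hξ.2]⟩, ?_⟩
        simp only [hv]
        rw [cast1 n j, e]
        simp only [hfy]
        push_cast
        congr 3; ring) hK
  have T1 := ((UC.tri3 U0 Ua Ub').add (UC.tri3 U0 Ua' Ub)).riemann hK (by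
    unfold tri3; fun_prop)
  have T2 := (((UC.sqs Ua).add (UC.sqs Ub')).add ((UC.sqs Ua').add (UC.sqs Ub))).riemann hK (by
    unfold sqs; fun_prop)
  have L1 := ((T1.const_mul (1/6)).pow 2).const_mul (36 * π)
  have L2 := (T2.const_mul (1/4)).pow 3
  refine le_of_tendsto_of_tendsto' L1 L2 fun n => ?_
  have hper1 : ∀ k j, v k n (n + 2) j = v k n 0 j := by
    intro k j
    have hN : (n + 2 : ℝ) ≠ 0 := by positivity
    simp only [hv]
    rw [h0 k _ (Or.inl _), h0 k _ (Or.inl _)]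
    · simp [abs_of_pos hK]
    · have : -K + ((n + 2 : ℕ) : ℝ) * (2 * K / (n + 2)) = K := by push_cast; field_simp; ring
      simp only [this]; exact le_abs_self K
  have hper2 : ∀ k i, v k n i (n + 2) = v k n i 0 := by
    intro k j
    have hN : (n + 2 : ℝ) ≠ 0 := by positivity
    simp only [hv]
    rw [h0 k _ (Or.inr _), h0 k _ (Or.inr _)]
    · simp [abs_of_pos hK]
    · have : -K + ((n + 2 : ℕ) : ℝ) * (2 * K / (n + 2)) = K := by push_cast; field_simp; ring
      simp only [this]; exact le_abs_self K
  have key := torus_grid n (fun q => v 0 n q.1 q.2) (fun q => v 1 n q.1 q.2) (fun q => v 2 n q.1 q.2)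
    (hper1 0) (hper2 0) (hper1 1) (hper2 1) (hper1 2) (hper2 2)
  have hne := (hhp n).ne'
  refine le_trans (le_of_eq ?_) (key.trans (le_of_eq ?_))
  · congr 3
    refine Finset.sum_congr rfl fun i _ => Finset.sum_congr rfl fun j _ => ?_
    simp only [tri3, sdet, cr]
    generalize 2 * K / ((n:ℝ) + 2) = h at hne
    field_simp
    ring
  · congr 2
    refine Finset.sum_congr rfl fun i _ => Finset.sum_congr rfl fun j _ => ?_
    simp only [sqs, sq3]
    generalize 2 * K / ((n:ℝ) + 2) = h at hne
    field_simp
    ring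

lemma box_integral (G : ℝ × ℝ → ℝ) (hG : Continuous G) (hs : HasCompactSupport G) (K : ℝ) (hK : 0 < K)
    (h0 : ∀ p : ℝ × ℝ, K ≤ |p.1| ∨ K ≤ |p.2| → G p = 0) :
    ∫ s in (-K)..K, ∫ t in (-K)..K, G (s, t) = ∫ p, G p := by
  have hIntg : Integrable G := hG.integrable_of_hasCompactSupport hs
  have h1 : ∫ p in (Set.Ioc (-K) K ×ˢ Set.Ioc (-K) K), G p = ∫ p, G p := by
    refine setIntegral_eq_integral_of_forall_compl_eq_zero fun p hp => h0 p ?_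
    by_contra hcon
    push Not at hcon
    exact hp ⟨⟨(abs_lt.1 hcon.1).1, (abs_lt.1 hcon.1).2.le⟩, ⟨(abs_lt.1 hcon.2).1, (abs_lt.1 hcon.2).2.le⟩⟩
  rw [← h1, Measure.volume_eq_prod, setIntegral_prod _ hIntg.integrableOn,
    intervalIntegral.integral_of_le (by linarith)]
  simp only [intervalIntegral.integral_of_le (show -K ≤ K by linarith)]

lemma vol_isop (Ω : Set (ℝ × ℝ)) (u : ℝ × ℝ → Fin 3 → ℝ) (hu : IsAdmissible Ω u) :
    32 * π * (vol Ω u) ^ 2 ≤ (dirEnergy Ω u) ^ 3 := by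
  obtain ⟨hc, hs, hsub⟩ := hu
  have hd : Differentiable ℝ u := hc.differentiable (by simp)
  set f : Fin 3 → ℝ × ℝ → ℝ := fun k p => u p k with hf
  have hfc : ∀ k, ContDiff ℝ (⊤ : ℕ∞) (f k) := fun k => contDiff_pi.1 hc k
  have hfs : ∀ k, HasCompactSupport (f k) := fun k =>
    hs.comp_left (g := fun w : Fin 3 → ℝ => w k) rfl
  have hfd : ∀ k p w, fderiv ℝ (f k) p w = fderiv ℝ u p w k := by
    intro k p w
    have : HasFDerivAt (f k) ((ContinuousLinearMap.proj k).comp (fderiv ℝ u p)) p :=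
      (ContinuousLinearMap.proj (R := ℝ) (φ := fun _ : Fin 3 => ℝ) k).hasFDerivAt.comp p (hd p).hasFDerivAt
    rw [this.fderiv]; rfl
  have hout : ∀ p, p ∉ tsupport u → u p = 0 ∧ fderiv ℝ u p = 0 := fun p hp =>
    ⟨image_eq_zero_of_notMem_tsupport hp, by
      by_contra h
      exact hp (support_fderiv_subset ℝ h)⟩
  obtain ⟨K, hK, hKs⟩ : ∃ K > 0, ∀ p ∈ tsupport u, |p.1| < K ∧ |p.2| < K := by
    obtain ⟨R, hR⟩ := hs.isBounded.subset_ball (0 : ℝ × ℝ)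
    refine ⟨max R 1, by positivity, fun p hp => ?_⟩
    have h1 := hR hp
    rw [mem_ball_zero_iff, Prod.norm_def, max_lt_iff] at h1
    exact ⟨lt_of_lt_of_le h1.1 (le_max_left _ _), lt_of_lt_of_le h1.2 (le_max_left _ _)⟩
  have hK0 : ∀ p : ℝ × ℝ, K ≤ |p.1| ∨ K ≤ |p.2| → p ∉ tsupport u := by
    intro p hp h
    have := hKs p h
    rcases hp with h' | h'
    · linarith [this.1]
    · linarith [this.2]
  have key := iso_int f hfc hfs K hK (fun k p hp => by simp only [hf, (hout p (hK0 p hp)).1]; rfl)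
  simp only [hfd] at key
  have hDc : Continuous (fderiv ℝ u) := hc.continuous_fderiv (by simp)
  have huc : ∀ k, Continuous fun p => u p k := fun k => (hfc k).continuous
  have hpc : ∀ w k, Continuous fun p => fderiv ℝ u p w k := fun w k =>
    (continuous_apply k).comp (hDc.clm_apply continuous_const)
  have hcs : ∀ G : ℝ × ℝ → ℝ, (∀ p, p ∉ tsupport u → G p = 0) → HasCompactSupport G := fun G hG =>
    HasCompactSupport.intro hs hG
  set G1 : ℝ × ℝ → ℝ := fun p => tri3 (fun k => u p k) (fun k => fderiv ℝ u p (1, 0) k) (fun k => fderiv ℝ u p (0, 1) k)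
       + tri3 (fun k => u p k) (fun k => fderiv ℝ u p (1, 0) k) (fun k => fderiv ℝ u p (0, 1) k) with hG1
  set G2 : ℝ × ℝ → ℝ := fun p => sqs (fun k => fderiv ℝ u p (1, 0) k) + sqs (fun k => fderiv ℝ u p (0, 1) k)
       + (sqs (fun k => fderiv ℝ u p (1, 0) k) + sqs (fun k => fderiv ℝ u p (0, 1) k)) with hG2
  have z1 : ∀ p, p ∉ tsupport u → G1 p = 0 := fun p hp => by
    simp [hG1, tri3, (hout p hp).1]
  have z2 : ∀ p, p ∉ tsupport u → G2 p = 0 := fun p hp => by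
    simp [hG2, sqs, (hout p hp).2]
  have c1 : Continuous G1 := by simp only [hG1, tri3]; fun_prop
  have c2 : Continuous G2 := by simp only [hG2, sqs]; fun_prop
  have i1 := box_integral G1 c1 (hcs _ z1) K hK (fun p hp => z1 p (hK0 p hp))
  have i2 := box_integral G2 c2 (hcs _ z2) K hK (fun p hp => z2 p (hK0 p hp))
  simp only [hG1] at i1
  simp only [hG2] at i2
  rw [i1, i2] at key
  have v1 : ∫ p, G1 p = 2 * vol Ω u := by
    rw [← setIntegral_eq_integral_of_forall_compl_eq_zero (s := Ω) (fun p hp => z1 p fun h => hp (hsub h)),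
      vol, ← integral_const_mul]
    congr 1
    funext p
    simp [hG1, tri3, dot3, cross_apply, Fin.sum_univ_three, pderivX, pderivY]
    ring
  have v2 : ∫ p, G2 p = 2 * dirEnergy Ω u := by
    rw [← setIntegral_eq_integral_of_forall_compl_eq_zero (s := Ω) (fun p hp => z2 p fun h => hp (hsub h)),
      dirEnergy, ← integral_const_mul]
    congr 1
    funext p
    simp only [hG2, sqs, dot3, Fin.sum_univ_three, pderivX, pderivY]
    ring
  simp only [hG1] at v1
  simp only [hG2] at v2
  rw [v1, v2] at key
  nlinarith [key]

/-- For `0 < δ < 3/2`, any `u` on the δ-Nehari manifold satisfies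
`E(u) ≥ a(δ)·r(δ)²`, so the depth `d(δ)` satisfies `d(δ) ≥ a(δ)r(δ)²`. -/
theorem depth_lower_bound (Ω : Set (ℝ × ℝ)) (hΩ : IsOpen Ω)
    (hΩb : Bornology.IsBounded Ω) (H : ℝ) (hH : 0 < H) (δ : ℝ)
    (hδ0 : 0 < δ) (hδ1 : δ < 3 / 2) (u : ℝ × ℝ → Fin 3 → ℝ)
    (hu : IsAdmissible Ω u) (hD : Dfun Ω H δ u = 0) (hne : dnorm Ω u ≠ 0) :
    aPW δ * (rPW H δ) ^ 2 ≤ Efun Ω H u := by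
  have hiso := vol_isop Ω u hu
  have hpos : 0 < dirEnergy Ω u := by
    by_contra h
    exact hne (sqrt_eq_zero_of_nonpos (not_lt.1 h))
  unfold Dfun at hD
  unfold Efun aPW rPW
  set D := dirEnergy Ω u
  set V := vol Ω u
  have hV : V = -(δ * D) / (2 * H) := by
    field_simp; linarith
  have hr : (2 * √(2 * π) * δ / H) ^ 2 = 8 * π * δ ^ 2 / H ^ 2 := by
    rw [div_pow, mul_pow, mul_pow, sq_sqrt (by positivity)]; ring
  have h1 : 8 * π * δ ^ 2 / H ^ 2 ≤ D := by
    rw [hV] at hiso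
    have e : 32 * π * (-(δ * D) / (2 * H)) ^ 2 = (8 * π * δ ^ 2 / H ^ 2) * D ^ 2 := by
      field_simp; ring
    rw [e, pow_succ' D 2] at hiso
    exact le_of_mul_le_mul_right hiso (by positivity)
  rw [hr]
  have e2 : 1 / 2 * D + 2 * H / 3 * V = (1 / 2 - δ / 3) * D := by
    rw [hV]; field_simp; ring
  rw [e2]
  exact mul_le_mul_of_nonneg_left h1 (by linarith)
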